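/- arXiv:2510.06032 — 3 statements merged into one kernel-verified Lean document; each statement's English description precedes it below -/
import Mathlib

section
/- Fix an integer k ≥ 1 (first moment bound). For every real c < (1/(k + 1)) · √(π/2) · (k!)^{1/k} there exists N such that for all integers n ≥ N the following holds: if M ≥ 0 is an integer and (a_1, …, a_n) is an M-bounded distinct subset sum sequence in ℤ^k, then M ≥ c · 2^{n/k} / √n. (Equivalently, M ≥ (1 + o(1)) · (1/(k+1)) · √(π/2) · (2^{n/k}/√n) · (k!)^{1/k} as n → ∞.) -/
open Finset

lemma fmb_hockey (k B R : ℕ) :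
    ∑ u ∈ range B, (R - u + k).choose (k + 1) ≤ (R + k + 1).choose (k + 2) := by
  induction B generalizing R with
  | zero => simp
  | succ B ih =>
    rw [sum_range_succ']
    rcases R with _ | R
    · have := ih 0
      simp at this ⊢
    · have h := ih R
      have h2 : ∑ u ∈ range B, (R + 1 - (u + 1) + k).choose (k + 1)
          = ∑ u ∈ range B, (R - u + k).choose (k + 1) := by
        apply sum_congr rfl; intro u _; congr 2; omega
      rw [h2, show R + 1 + k + 1 = (R + k + 1) + 1 by ring, Nat.choose_succ_succ' (R + k + 1) (k + 1)]
      rw [show R + 1 - 0 + k = R + k + 1 by omega]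
      rw [show k + 1 + 1 = k + 2 by ring]
      omega

lemma fmb_box (k B R : ℕ) :
    ∑ w : Fin k → Fin B, (R - ∑ j, (w j : ℕ)) ≤ (R + k).choose (k + 1) := by
  induction k generalizing R with
  | zero => simp
  | succ k ih =>
    rw [← (Fin.consEquiv (fun _ : Fin (k+1) => Fin B)).sum_comp, Fintype.sum_prod_type]
    simp only [Fin.consEquiv_apply, Fin.sum_univ_succ, Fin.cons_zero, Fin.cons_succ]
    calc _ ≤ ∑ u : Fin B, (R - u + k).choose (k + 1) := by
          apply sum_le_sum
          intro u _
          refine le_trans (le_of_eq ?_) (ih (R - u))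
          apply sum_congr rfl; intro w _; omega
      _ = ∑ u ∈ range B, (R - u + k).choose (k + 1) :=
          Fin.sum_univ_eq_sum_range (fun u => (R - u + k).choose (k + 1)) B
      _ ≤ _ := by
          have := fmb_hockey k B R
          rwa [show R + (k + 1) = R + k + 1 by ring]

lemma fmb_inj {ι : Type*} [Fintype ι] (k R : ℕ) (w : ι → Fin k → ℕ) (hw : Function.Injective w) :
    ∑ A, (R - ∑ j, w A j) ≤ (R + k).choose (k + 1) := by
  classical
  set B := (∑ A, ∑ j, w A j) + 1 with hB
  have hlt : ∀ A j, w A j < B := by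
    intro A j
    have h1 : w A j ≤ ∑ j, w A j := single_le_sum (f := fun j => w A j) (by simp) (mem_univ j)
    have h2 : ∑ j, w A j ≤ ∑ A, ∑ j, w A j :=
      single_le_sum (f := fun A => ∑ j, w A j) (by simp) (mem_univ A)
    omega
  let w' : ι → Fin k → Fin B := fun A j => ⟨w A j, hlt A j⟩
  have hw' : Function.Injective w' := by
    intro A A' h
    apply hw
    funext j
    have := congrFun h j
    simpa [w'] using this
  calc _ = ∑ A, (fun v : Fin k → Fin B => R - ∑ j, (v j : ℕ)) (w' A) := rfl
    _ = ∑ v ∈ univ.image w', (R - ∑ j, (v j : ℕ)) := by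
        rw [sum_image (fun a _ b _ h => hw' h)]
    _ ≤ ∑ v : Fin k → Fin B, (R - ∑ j, (v j : ℕ)) :=
        sum_le_sum_of_subset (subset_univ _)
    _ ≤ _ := fmb_box k B R

/-- convexity -/
lemma fmb_conv (b M r : ℤ) (h0 : 0 ≤ b) (h1 : b ≤ M) :
    |r - b| + |r + b| ≤ |r - M| + |r + M| := by
  rcases abs_cases (r - b) with h | h <;> rcases abs_cases (r + b) with h' | h' <;>
  rcases abs_cases (r - M) with h2 | h2 <;> rcases abs_cases (r + M) with h2' | h2' <;> omega

lemma fmb_upper {ι : Type*} [DecidableEq ι] (s : Finset ι) (b : ι → ℤ) (M : ℤ)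
    (hb : ∀ i, 0 ≤ b i ∧ b i ≤ M) (c : ℤ) :
    ∑ A ∈ s.powerset, |c + (2 * ∑ i ∈ A, b i - ∑ i ∈ s, b i)| ≤
    ∑ A ∈ s.powerset, |c + (2 * ∑ _i ∈ A, M - ∑ _i ∈ s, M)| := by
  induction s using Finset.induction_on generalizing c with
  | empty => simp
  | insert x s hx ih =>
    rw [sum_powerset_insert hx, sum_powerset_insert hx]
    have key : ∀ (f : ι → ℤ) (c : ℤ),
        (∑ A ∈ s.powerset, |c + (2 * ∑ i ∈ A, f i - ∑ i ∈ insert x s, f i)|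
        + ∑ A ∈ s.powerset, |c + (2 * ∑ i ∈ insert x A, f i - ∑ i ∈ insert x s, f i)|)
        = ∑ A ∈ s.powerset, |(c - f x) + (2 * ∑ i ∈ A, f i - ∑ i ∈ s, f i)|
        + ∑ A ∈ s.powerset, |(c + f x) + (2 * ∑ i ∈ A, f i - ∑ i ∈ s, f i)| := by
      intro f c
      congr 1
      · apply sum_congr rfl; intro A _; rw [sum_insert hx]; congr 1; ring
      · apply sum_congr rfl; intro A hA
        rw [sum_insert hx, sum_insert (fun h => hx (mem_powerset.1 hA h))]; congr 1; ring
    rw [key b, key (fun _ => M)]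
    refine (add_le_add (ih (c - b x)) (ih (c + b x))).trans ?_
    rw [← sum_add_distrib, ← sum_add_distrib]
    apply sum_le_sum
    intro A _
    have := fmb_conv (b x) M (c + (2 * ∑ _i ∈ A, M - ∑ _i ∈ s, M)) (hb x).1 (hb x).2
    convert this using 3 <;> first | rfl | ring

lemma fmb_D_succ {ι : Type*} [DecidableEq ι] (s : Finset ι) (x : ι) (hx : x ∉ s) :
    ∑ A ∈ (insert x s).powerset, |2 * (#A : ℤ) - #(insert x s)| =
    2 * ∑ A ∈ s.powerset, |2 * (#A : ℤ) - #s| + 2 * #{A ∈ s.powerset | 2 * #A = #s} := by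
  rw [sum_powerset_insert hx, card_filter]
  push_cast
  rw [mul_sum, mul_sum, ← sum_add_distrib, ← sum_add_distrib]
  apply sum_congr rfl
  intro A hA
  rw [card_insert_of_notMem hx, card_insert_of_notMem (fun h => hx (mem_powerset.1 hA h))]
  push_cast
  split_ifs with h
  · rcases abs_cases (2 * (#A : ℤ) - (#s + 1)) with h | h <;>
    rcases abs_cases (2 * ((#A : ℤ) + 1) - (#s + 1)) with h' | h' <;>
    rcases abs_cases (2 * (#A : ℤ) - #s) with h2 | h2 <;> omega
  · rcases abs_cases (2 * (#A : ℤ) - (#s + 1)) with h | h <;>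
    rcases abs_cases (2 * ((#A : ℤ) + 1) - (#s + 1)) with h' | h' <;>
    rcases abs_cases (2 * (#A : ℤ) - #s) with h2 | h2 <;> omega

lemma fmb_Z_even {ι : Type*} [DecidableEq ι] (s : Finset ι) (m : ℕ) (hs : #s = 2 * m) :
    #{A ∈ s.powerset | 2 * #A = #s} = m.centralBinom := by
  rw [Nat.centralBinom, ← hs, ← card_powersetCard]
  congr 1
  ext A
  simp only [mem_filter, mem_powerset, mem_powersetCard]
  constructor <;> rintro ⟨h1, h2⟩ <;> refine ⟨h1, ?_⟩ <;> omega

lemma fmb_Z_odd {ι : Type*} [DecidableEq ι] (s : Finset ι) (m : ℕ) (hs : #s = 2 * m + 1) :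
    #{A ∈ s.powerset | 2 * #A = #s} = 0 := by
  rw [card_eq_zero, filter_eq_empty_iff]
  intro A _
  omega

lemma fmb_D {ι : Type*} [DecidableEq ι] (m : ℕ) :
    (∀ s : Finset ι, #s = 2 * m →
      ∑ A ∈ s.powerset, |2 * (#A : ℤ) - #s| = 2 * m * m.centralBinom) ∧
    (∀ s : Finset ι, #s = 2 * m + 1 →
      ∑ A ∈ s.powerset, |2 * (#A : ℤ) - #s| = (4 * m + 2) * m.centralBinom) := by
  have step : ∀ m : ℕ, (∀ s : Finset ι, #s = 2 * m →
      ∑ A ∈ s.powerset, |2 * (#A : ℤ) - #s| = 2 * m * m.centralBinom) →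
    (∀ s : Finset ι, #s = 2 * m + 1 →
      ∑ A ∈ s.powerset, |2 * (#A : ℤ) - #s| = (4 * m + 2) * m.centralBinom) := by
    intro m h s hs
    obtain ⟨x, t, hx, rfl, ht⟩ := card_eq_succ.1 hs
    rw [fmb_D_succ t x hx, h t ht, fmb_Z_even t m ht]
    ring
  induction m with
  | zero =>
    have h0 : ∀ s : Finset ι, #s = 2 * 0 →
      ∑ A ∈ s.powerset, |2 * (#A : ℤ) - #s| = 2 * (0 : ℕ) * (0 : ℕ).centralBinom := by
      intro s hs
      have : s = ∅ := by simpa using hs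
      subst this
      simp
    exact ⟨h0, step 0 h0⟩
  | succ m ih =>
    have h0 : ∀ s : Finset ι, #s = 2 * (m + 1) →
      ∑ A ∈ s.powerset, |2 * (#A : ℤ) - #s| = 2 * (m + 1 : ℕ) * (m + 1 : ℕ).centralBinom := by
      intro s hs
      obtain ⟨x, t, hx, rfl, ht⟩ := card_eq_succ.1 (show #s = (2 * m + 1) + 1 by omega)
      rw [fmb_D_succ t x hx, ih.2 t ht, fmb_Z_odd t m ht]
      have := Nat.succ_mul_centralBinom_succ m
      zify at this
      push_cast
      linear_combination (-2) * this
    exact ⟨h0, step _ h0⟩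

lemma fmb_wallis (m : ℕ) :
    (((m.centralBinom : ℝ)) / 4 ^ m) ^ 2 * (2 * m + 1) ^ 2 ≤ (2 * m + 2) * (2 / Real.pi) := by
  have h1 := Real.Wallis.le_W m
  have h2 := Real.Wallis.W_eq_factorial_ratio m
  have hW := Real.Wallis.W_pos m
  have hc : (m.centralBinom : ℝ) = (2 * m).factorial / (m.factorial ^ 2) := by
    rw [Nat.centralBinom, Nat.cast_choose ℝ (by omega : m ≤ 2 * m), show 2 * m - m = m by omega, sq]
  have hf : (0 : ℝ) < m.factorial := by exact_mod_cast m.factorial_pos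
  have hf2 : (0 : ℝ) < (2 * m).factorial := by exact_mod_cast (2 * m).factorial_pos
  have h4 : (2 : ℝ) ^ (4 * m) = (4 ^ m) ^ 2 := by
    rw [← pow_mul, show (4 : ℝ) = 2 ^ 2 by norm_num, ← pow_mul]; congr 1; ring
  have h3 : (((m.centralBinom : ℝ)) / 4 ^ m) ^ 2 * (2 * m + 1) = (Real.Wallis.W m)⁻¹ := by
    rw [h2, hc, h4]
    field_simp
  rw [show ((2 : ℝ) * m + 1) ^ 2 = (2 * m + 1) * (2 * m + 1) by ring, ← mul_assoc, h3]
  have hpi := Real.pi_pos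
  rw [inv_mul_le_iff₀ hW]
  have : ((2 : ℝ) * m + 1) = (2 * m + 1) / (2 * m + 2) * (Real.pi / 2) * ((2 * m + 2) * (2 / Real.pi)) := by
    field_simp
  calc _ = _ := this
    _ ≤ _ := by gcongr

lemma fmb_D_bound (n : ℕ) :
    ((∑ A : Finset (Fin n), |2 * (#A : ℤ) - n| : ℤ) : ℝ) ≤
      2 ^ n * Real.sqrt (2 * (n + 2) / Real.pi) := by
  have hpi := Real.pi_pos
  suffices h : ∀ m : ℕ, ∀ y : ℝ, 0 ≤ y → y ≤ (2 * m + 1) → (2 * m : ℝ) ≤ n →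
      2 ^ n * (y * (m.centralBinom / 4 ^ m)) ≤ 2 ^ n * Real.sqrt (2 * (n + 2) / Real.pi) by
    have hc : #(univ : Finset (Fin n)) = n := by simp
    rcases Nat.even_or_odd' n with ⟨m, hm | hm⟩
    · have h1 := (fmb_D (ι := Fin n) m).1 univ (by simp [← hm])
      rw [powerset_univ, hc] at h1
      rw [h1]
      refine le_trans (le_of_eq ?_) (h m (2 * m) (by positivity) (by linarith) (by rw [hm]; push_cast; rfl))
      rw [hm, pow_mul]; push_cast; norm_num; field_simp
    · have h1 := (fmb_D (ι := Fin n) m).2 univ (by simp [← hm])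
      rw [powerset_univ, hc] at h1
      rw [h1]
      refine le_trans (le_of_eq ?_) (h m (2 * m + 1) (by positivity) le_rfl (by rw [hm]; push_cast; linarith))
      rw [hm, pow_succ, pow_mul]; push_cast; norm_num; field_simp; ring
  intro m y hy hym hmn
  gcongr
  apply Real.le_sqrt_of_sq_le
  calc (y * (m.centralBinom / 4 ^ m)) ^ 2 = ((m.centralBinom : ℝ) / 4 ^ m) ^ 2 * y ^ 2 := by ring
    _ ≤ ((m.centralBinom : ℝ) / 4 ^ m) ^ 2 * (2 * m + 1) ^ 2 := by gcongr
    _ ≤ (2 * m + 2) * (2 / Real.pi) := fmb_wallis m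
    _ ≤ (n + 2) * (2 / Real.pi) := by gcongr
    _ = _ := by ring

lemma fmb_w_inj (p q t : ℤ)
    (h1 : (|2 * p - t| - if 2 * p - t < 0 then 1 else 0).toNat =
      (|2 * q - t| - if 2 * q - t < 0 then 1 else 0).toNat) : p = q := by
  rcases abs_cases (2 * p - t) with h | h <;> rcases abs_cases (2 * q - t) with h' | h' <;>
    split_ifs at h1 <;> omega

lemma fmb_core (k n M R : ℕ) (a : Fin n → Fin k → ℤ)
    (ha : ∀ i j, 0 ≤ a i j ∧ a i j ≤ (M : ℤ))
    (hd : ∀ A B : Finset (Fin n), A ≠ B → ∑ i ∈ A, a i ≠ ∑ i ∈ B, a i) :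
    (2 : ℝ) ^ n * R ≤ (R + k).choose (k + 1) +
      k * (M * (2 ^ n * Real.sqrt (2 * (n + 2) / Real.pi))) := by
  let X : Finset (Fin n) → Fin k → ℤ := fun A j => 2 * ∑ i ∈ A, a i j - ∑ i, a i j
  let w : Finset (Fin n) → Fin k → ℕ := fun A j => (|X A j| - if X A j < 0 then 1 else 0).toNat
  have hwX : ∀ A j, (w A j : ℤ) ≤ |X A j| := by
    intro A j
    simp only [w]
    rcases abs_cases (X A j) with h | h <;> split_ifs <;> omega
  have hw : Function.Injective w := by
    intro A B h
    by_contra hne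
    apply hd A B hne
    funext j
    have h1 := congrFun h j
    simp only [w, X] at h1
    rw [Finset.sum_apply, Finset.sum_apply]
    exact fmb_w_inj _ _ _ h1
  have h1 := fmb_inj k R w hw
  have h2 : 2 ^ n * R ≤ (∑ A, (R - ∑ j, w A j)) + ∑ A, ∑ j, w A j := by
    rw [← sum_add_distrib]
    calc 2 ^ n * R = ∑ _A : Finset (Fin n), R := by simp
      _ ≤ _ := sum_le_sum (fun A _ => by omega)
  have h3 : ((∑ A, ∑ j, w A j : ℕ) : ℤ) ≤ ∑ j : Fin k, ∑ A, |X A j| := by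
    rw [sum_comm]
    push_cast
    exact sum_le_sum fun j _ => sum_le_sum fun A _ => hwX A j
  have h4 : ∀ j, ∑ A, |X A j| ≤ M * ∑ A : Finset (Fin n), |2 * (#A : ℤ) - n| := by
    intro j
    have := fmb_upper (univ : Finset (Fin n)) (fun i => a i j) M (fun i => ha i j) 0
    rw [powerset_univ] at this
    simp only [zero_add] at this
    refine this.trans (le_of_eq ?_)
    rw [mul_sum]
    apply sum_congr rfl
    intro A _
    rw [sum_const, sum_const, card_univ, Fintype.card_fin]
    simp only [nsmul_eq_mul]
    rw [show 2 * ((#A : ℤ) * M) - n * M = M * (2 * #A - n) by ring, abs_mul, Nat.abs_cast]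
  have h5 : ((∑ A, ∑ j, w A j : ℕ) : ℤ) ≤ k * (M * ∑ A : Finset (Fin n), |2 * (#A : ℤ) - n|) := by
    refine h3.trans ((sum_le_sum fun j _ => h4 j).trans (le_of_eq ?_))
    simp
  have h6 : ((∑ A, ∑ j, w A j : ℕ) : ℝ) ≤
      k * (M * ((∑ A : Finset (Fin n), |2 * (#A : ℤ) - n| : ℤ) : ℝ)) := by
    exact_mod_cast h5
  have h7 : (2 : ℝ) ^ n * R ≤ (R + k).choose (k + 1) + ((∑ A, ∑ j, w A j : ℕ) : ℝ) := by
    exact_mod_cast h2.trans (Nat.add_le_add_right h1 _)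
  have h8 := fmb_D_bound n
  calc _ ≤ _ := h7
    _ ≤ _ := by gcongr; exact h6.trans (by gcongr)

lemma fmb_quant (k n M : ℕ) (hk : 1 ≤ k) (a : Fin n → Fin k → ℤ)
    (ha : ∀ i j, 0 ≤ a i j ∧ a i j ≤ (M : ℤ))
    (hd : ∀ A B : Finset (Fin n), A ≠ B → ∑ i ∈ A, a i ≠ ∑ i ∈ B, a i)
    (T : ℝ) (hT : T ^ k = k.factorial * 2 ^ n) (hTk : (k : ℝ) ≤ T) :
    T / (k + 1) - (k + 1) / k ≤ M * Real.sqrt (2 * (n + 2) / Real.pi) := by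
  have hT0 : 0 ≤ T := le_trans (by positivity) hTk
  have hk0 : (0 : ℝ) < k := by exact_mod_cast hk
  have hfl : k ≤ ⌊T⌋₊ := Nat.le_floor hTk
  obtain ⟨R, hR⟩ := Nat.exists_eq_add_of_le' hfl
  have hRT : ((R + k : ℕ) : ℝ) ≤ T := hR ▸ Nat.floor_le hT0
  have hTR : T < ((R + k : ℕ) : ℝ) + 1 := hR ▸ Nat.lt_floor_add_one T
  push_cast at hTR
  have h := fmb_core k n M R a ha hd
  have hch : ((R + k).choose (k + 1) : ℝ) ≤ 2 ^ n * (T / (k + 1)) := by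
    calc ((R + k).choose (k + 1) : ℝ) ≤ ((R + k : ℕ) : ℝ) ^ (k + 1) / (k + 1).factorial :=
          Nat.choose_le_pow_div _ _
      _ ≤ T ^ (k + 1) / (k + 1).factorial := by gcongr
      _ = _ := by
        have : (0 : ℝ) < k.factorial := by exact_mod_cast k.factorial_pos
        rw [pow_succ, hT, Nat.factorial_succ]; push_cast; field_simp
  have h2 : (2 : ℝ) ^ n * R ≤
      2 ^ n * (T / (k + 1) + k * (M * Real.sqrt (2 * (n + 2) / Real.pi))) := by
    linarith
  have h3 := le_of_mul_le_mul_left h2 (by positivity)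
  have h4 : k * (T / (k + 1) - (k + 1) / k) ≤ k * (M * Real.sqrt (2 * (n + 2) / Real.pi)) := by
    have : k * (T / (k + 1) - (k + 1) / k) = T - T / (k + 1) - (k + 1) := by field_simp; ring
    linarith
  exact le_of_mul_le_mul_left h4 hk0

open Filter Topology in
/-- First moment bound: for any `c < (1/(k + 1)) · √(π/2) · (k!)^{1/k}`, for all large `n`,
any `M`-bounded distinct subset sum sequence `(a_1, …, a_n)` in `ℤ^k` satisfies
`M ≥ c · 2^{n/k} / √n`. -/
theorem first_moment_bound (k : ℕ) (hk : 1 ≤ k) (c : ℝ)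
    (hc : c < (1 / ((k : ℝ) + 1)) * Real.sqrt (Real.pi / 2) *
        (k.factorial : ℝ) ^ ((1 : ℝ) / k)) :
    ∃ N : ℕ, ∀ n : ℕ, N ≤ n → ∀ M : ℕ, ∀ a : Fin n → Fin k → ℤ,
      (∀ i j, 0 ≤ a i j ∧ a i j ≤ (M : ℤ)) →
      (∀ A B : Finset (Fin n), A ≠ B → ∑ i ∈ A, a i ≠ ∑ i ∈ B, a i) →
      c * (2 : ℝ) ^ ((n : ℝ) / k) / Real.sqrt n ≤ (M : ℝ) := by
  have hk0 : (0 : ℝ) < k := by exact_mod_cast hk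
  set f : ℝ := (k.factorial : ℝ) ^ ((1 : ℝ) / k) with hf
  have hfac : (1 : ℝ) ≤ k.factorial := by exact_mod_cast k.factorial_pos
  have hf1 : 1 ≤ f := Real.one_le_rpow hfac (by positivity)
  have hpi := Real.pi_pos
  set s : ℝ := Real.sqrt (Real.pi / 2) with hs
  have hs0 : 0 < s := Real.sqrt_pos.2 (by positivity)
  have hq : Tendsto (fun n : ℕ => (2 : ℝ) ^ ((n : ℝ) / k)) atTop atTop :=
    (tendsto_rpow_atTop_of_base_gt_one 2 (by norm_num)).comp
      (tendsto_natCast_atTop_atTop.atTop_div_const hk0)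
  have hl1 : Tendsto (fun n : ℕ => 1 / ((k : ℝ) + 1) * s * f
      - ((k + 1) / k * s) / (2 : ℝ) ^ ((n : ℝ) / k)) atTop
      (𝓝 (1 / ((k : ℝ) + 1) * s * f - 0)) :=
    tendsto_const_nhds.sub (hq.const_div_atTop _)
  have hl2 : Tendsto (fun n : ℕ => c * Real.sqrt (1 + 2 / (n : ℝ))) atTop
      (𝓝 (c * Real.sqrt (1 + 0))) :=
    (((tendsto_const_div_atTop_nhds_zero_nat 2).const_add 1).sqrt).const_mul c
  simp only [add_zero, Real.sqrt_one, mul_one, sub_zero] at hl1 hl2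
  have hev := (hl2.eventually_lt hl1 hc).and
    ((hq.eventually_ge_atTop (k : ℝ)).and (eventually_ge_atTop 1))
  obtain ⟨N, hN⟩ := eventually_atTop.1 hev
  refine ⟨N, fun n hn M a ha hd => ?_⟩
  obtain ⟨h1, h2, h3⟩ := hN n hn
  set q : ℝ := (2 : ℝ) ^ ((n : ℝ) / k) with hqd
  have hq0 : 0 < q := by positivity
  have hn0 : (0 : ℝ) < n := by exact_mod_cast h3
  have hT : (f * q) ^ k = k.factorial * 2 ^ n := by
    rw [mul_pow, hf, hqd, ← Real.rpow_natCast, ← Real.rpow_natCast, ← Real.rpow_mul (by positivity),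
      ← Real.rpow_mul (by positivity)]
    rw [one_div, inv_mul_cancel₀ hk0.ne', div_mul_cancel₀ _ hk0.ne']
    simp
  have h4 := fmb_quant k n M hk a ha hd (f * q) hT (by nlinarith)
  have h5 : Real.sqrt (2 * (n + 2) / Real.pi) = Real.sqrt (1 + 2 / (n : ℝ)) * Real.sqrt n / s := by
    rw [hs, ← Real.sqrt_mul (by positivity), ← Real.sqrt_div (by positivity)]
    congr 1
    field_simp
  rw [h5] at h4
  have hr0 : 0 < Real.sqrt n := Real.sqrt_pos.2 hn0
  set r := Real.sqrt (1 + 2 / (n : ℝ)) with hr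
  have hrp : 0 < r := Real.sqrt_pos.2 (by positivity)
  have h6 : r * (c * q) ≤ r * (M * Real.sqrt n) := by
    calc r * (c * q) = (c * r) * q := by ring
      _ ≤ (1 / ((k : ℝ) + 1) * s * f - ((k + 1) / k * s) / q) * q := by gcongr
      _ = s * (f * q / (k + 1) - (k + 1) / k) := by field_simp
      _ ≤ s * (M * (r * Real.sqrt n / s)) := by gcongr
      _ = r * (M * Real.sqrt n) := by field_simp
  rw [div_le_iff₀ hr0]
  exact le_of_mul_le_mul_left h6 hrp
end

section
/- Fix an integer k ≥ 1 (third moment bound). For every real c < (k + 3)^{−1/3} · (π/8)^{1/6} · Γ((k + 3)/3)^{1/k} / Γ(4/3) there exists N such that for all integers n ≥ N the following holds: if M ≥ 0 is an integer and (a_1, …, a_n) is an M-bounded distinct subset sum sequence in ℤ^k, then M ≥ c · 2^{n/k} / √n. (Equivalently, M ≥ (1 + o(1)) · (k+3)^{−1/3} · (π/8)^{1/6} · (2^{n/k}/√n) · Γ((k+3)/3)^{1/k}/Γ(4/3) as n → ∞, where Γ is the Gamma function.) -/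
/-- Sum of `|x + M(±1 ± … ± 1)|^3` over all `2^n` sign choices. -/
noncomputable def signD (M : ℝ) : ℕ → ℝ → ℝ
  | 0, x => |x| ^ 3
  | n + 1, x => signD M n (x + M) + signD M n (x - M)

lemma signD_convex (M : ℝ) (n : ℕ) : ConvexOn ℝ Set.univ (signD M n) := by
  induction n with
  | zero =>
    have h : ConvexOn ℝ Set.univ (fun x : ℝ => |x|) := by
      exact convexOn_norm (E := ℝ) convex_univ
    exact h.pow (fun x _ => abs_nonneg x) 3
  | succ n ih =>
    have h1 : ConvexOn ℝ Set.univ (fun x => signD M n (x + M)) := by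
      simpa [Function.comp_def] using ih.translate_left M
    have h2 : ConvexOn ℝ Set.univ (fun x => signD M n (x - M)) := by
      simpa [Function.comp_def, sub_eq_add_neg] using ih.translate_left (-M)
    exact h1.add h2

lemma signD_neg (M : ℝ) (n : ℕ) (x : ℝ) : signD M n (-x) = signD M n x := by
  induction n generalizing x with
  | zero => simp [signD]
  | succ n ih =>
    simp only [signD]
    rw [← ih (-x + M), ← ih (-x - M)]
    ring_nf

lemma convex_step {φ : ℝ → ℝ} (h : ConvexOn ℝ Set.univ φ) {M b : ℝ} (hb : |b| ≤ M) (x : ℝ) :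
    φ (x + b) + φ (x - b) ≤ φ (x + M) + φ (x - M) := by
  obtain ⟨h1, h2⟩ := abs_le.mp hb
  rcases eq_or_lt_of_le (show 0 ≤ M by linarith) with h0 | h0
  · have : b = 0 := by linarith
    subst this; subst h0; simp
  · have e1 := h.2 (Set.mem_univ (x + M)) (Set.mem_univ (x - M))
      (show 0 ≤ (M + b) / (2 * M) by apply div_nonneg <;> linarith)
      (show 0 ≤ (M - b) / (2 * M) by apply div_nonneg <;> linarith) (by field_simp; ring)
    have e2 := h.2 (Set.mem_univ (x + M)) (Set.mem_univ (x - M))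
      (show 0 ≤ (M - b) / (2 * M) by apply div_nonneg <;> linarith)
      (show 0 ≤ (M + b) / (2 * M) by apply div_nonneg <;> linarith) (by field_simp; ring)
    simp only [smul_eq_mul] at e1 e2
    have q1 : (M + b) / (2 * M) * (x + M) + (M - b) / (2 * M) * (x - M) = x + b := by
      field_simp; ring
    have q2 : (M - b) / (2 * M) * (x + M) + (M + b) / (2 * M) * (x - M) = x - b := by
      field_simp; ring
    rw [q1] at e1
    rw [q2] at e2
    have q3 : (M - b) / (2 * M) = 1 - (M + b) / (2 * M) := by field_simp; ring
    rw [q3] at e1 e2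
    nlinarith

lemma signed_sum_le {ι : Type*} [DecidableEq ι] (M : ℝ) (b : ι → ℝ) (s : Finset ι)
    (hb : ∀ i, |b i| ≤ M) (x : ℝ) :
    ∑ A ∈ s.powerset, |x + (2 * ∑ i ∈ A, b i - ∑ i ∈ s, b i)| ^ 3 ≤ signD M s.card x := by
  induction s using Finset.induction_on generalizing x with
  | empty => simp [signD]
  | insert i s hi ih =>
    rw [Finset.sum_powerset_insert hi, Finset.card_insert_of_notMem hi]
    have h1 : ∑ A ∈ s.powerset, |x + (2 * ∑ i ∈ A, b i - ∑ j ∈ insert i s, b j)| ^ 3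
        = ∑ A ∈ s.powerset, |(x - b i) + (2 * ∑ i ∈ A, b i - ∑ i ∈ s, b i)| ^ 3 := by
      refine Finset.sum_congr rfl fun A _ => ?_
      rw [Finset.sum_insert hi]; ring_nf
    have h2 : ∑ A ∈ s.powerset, |x + (2 * ∑ j ∈ insert i A, b j - ∑ j ∈ insert i s, b j)| ^ 3
        = ∑ A ∈ s.powerset, |(x + b i) + (2 * ∑ i ∈ A, b i - ∑ i ∈ s, b i)| ^ 3 := by
      refine Finset.sum_congr rfl fun A hA => ?_
      rw [Finset.sum_insert hi, Finset.sum_insert (fun h => hi (Finset.mem_powerset.mp hA h))]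
      ring_nf
    rw [h1, h2]
    have := convex_step (signD_convex M s.card) (hb i) x
    simp only [signD]
    linarith [ih (x - b i), ih (x + b i)]

lemma signD_eq (M : ℝ) (n : ℕ) (x : ℝ) :
    signD M n x = ∑ A ∈ (Finset.range n).powerset, |x + M * (2 * A.card - n)| ^ 3 := by
  induction n generalizing x with
  | zero => simp [signD]
  | succ n ih =>
    rw [Finset.range_add_one, Finset.sum_powerset_insert (by simp), signD, ih, ih, add_comm]
    congr 1
    · refine Finset.sum_congr rfl fun A _ => ?_
      push_cast; ring_nf
    · refine Finset.sum_congr rfl fun A hA => ?_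
      rw [Finset.card_insert_of_notMem
        (fun h => by simpa using Finset.mem_powerset.mp hA h)]
      push_cast; ring_nf

lemma choose_step (m j : ℕ) :
    ((j : ℝ) + 1) * ((2 * m).choose (j + 1) : ℝ) = (2 * m - j) * ((2 * m).choose j : ℝ) := by
  have h := Nat.choose_succ_right_eq (2 * m) j
  rcases le_or_gt j (2 * m) with hj | hj
  · have h' : (((2 * m).choose (j + 1) * (j + 1) : ℕ) : ℝ)
        = (((2 * m).choose j * (2 * m - j) : ℕ) : ℝ) := by rw [h]
    push_cast [Nat.cast_sub hj] at h'
    linarith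
  · rw [Nat.choose_eq_zero_of_lt hj, Nat.choose_eq_zero_of_lt (by omega : 2 * m < j + 1)]; simp

/-- telescoping antiderivative -/
noncomputable def tel (m j : ℕ) : ℝ :=
  j * ((2 * m).choose j : ℝ) * (((j : ℝ) - m) * ((j : ℝ) - m - 1) + m)

lemma tel_step (m j : ℕ) :
    tel m j - tel m (j + 1) = 2 * ((2 * m).choose j : ℝ) * ((j : ℝ) - m) ^ 3 := by
  unfold tel
  push_cast
  rw [choose_step]
  ring

lemma partial_sum (m r : ℕ) :
    2 * ∑ j ∈ Finset.range r, ((2 * m).choose j : ℝ) * |(j : ℝ) - m| ^ 3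
      = if r ≤ m then tel m r else 2 * tel m m - tel m r := by
  induction r with
  | zero => simp [tel]
  | succ r ih =>
    rw [Finset.sum_range_succ, mul_add, ih]
    have ht := tel_step m r
    rcases lt_or_ge r m with h | h
    · rw [if_pos h.le, if_pos (by omega : r + 1 ≤ m)]
      rw [abs_of_nonpos (by have : (r : ℝ) < m := by exact_mod_cast h
                            linarith)]
      nlinarith
    · rw [if_neg (by omega : ¬ r + 1 ≤ m)]
      rw [abs_of_nonneg (by have : (m : ℝ) ≤ r := by exact_mod_cast h
                            linarith)]
      split_ifs with h'
      · have : r = m := by omega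
        subst this
        linarith
      · linarith

lemma signD_even (M : ℝ) (hM : 0 ≤ M) (m : ℕ) :
    signD M (2 * m) 0 = 8 * M ^ 3 * m ^ 2 * ((2 * m).choose m : ℝ) := by
  rw [signD_eq]
  have h := Finset.sum_powerset_apply_card
    (fun j : ℕ => |(0 : ℝ) + M * (2 * (j : ℝ) - ((2 * m : ℕ) : ℝ))| ^ 3) (x := Finset.range (2 * m))
  rw [h, Finset.card_range]
  have h2 : ∀ j ∈ Finset.range (2 * m + 1),
      (2 * m).choose j • |(0 : ℝ) + M * (2 * (j : ℝ) - ((2 * m : ℕ) : ℝ))| ^ 3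
      = 8 * M ^ 3 * (((2 * m).choose j : ℝ) * |(j : ℝ) - m| ^ 3) := by
    intro j _
    have : (0 : ℝ) + M * (2 * (j : ℝ) - ((2 * m : ℕ) : ℝ)) = (2 * M) * ((j : ℝ) - m) := by
      push_cast; ring
    rw [this, abs_mul, abs_of_nonneg (by linarith : 0 ≤ 2 * M), nsmul_eq_mul]
    ring
  rw [Finset.sum_congr rfl h2, ← Finset.mul_sum]
  have h3 := partial_sum m (2 * m + 1)
  rw [if_neg (by omega)] at h3
  have h4 : tel m (2 * m + 1) = 0 := by simp [tel]
  have h5 : tel m m = m ^ 2 * ((2 * m).choose m : ℝ) := by simp [tel]; ring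
  rw [h4, h5] at h3
  linear_combination 4 * M ^ 3 * h3

lemma centralBinom_bound (m : ℕ) (hm : 1 ≤ m) :
    ((2 * m).choose m : ℝ) * Real.sqrt (Real.pi * m) ≤ 4 ^ m := by
  have hW := Real.Wallis.le_W m
  rw [Real.Wallis.W_eq_factorial_ratio] at hW
  have hf : ((2 * m).choose m : ℝ) * (m.factorial : ℝ) ^ 2 = ((2 * m).factorial : ℝ) := by
    have := Nat.choose_mul_factorial_mul_factorial (show m ≤ 2 * m by omega)
    rw [show 2 * m - m = m by omega] at this
    rw [← this]; push_cast; ring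
  have hm' : (1 : ℝ) ≤ m := by exact_mod_cast hm
  have hfp : (0 : ℝ) < m.factorial := by exact_mod_cast m.factorial_pos
  have hcp : (0 : ℝ) < (2 * m).choose m := by
    exact_mod_cast Nat.choose_pos (by omega)
  rw [← hf] at hW
  set C : ℝ := ((2 * m).choose m : ℝ)
  have e : (2 : ℝ) ^ (4 * m) * (m.factorial : ℝ) ^ 4 /
      ((C * (m.factorial : ℝ) ^ 2) ^ 2 * (2 * m + 1)) = (4 ^ m) ^ 2 / (C ^ 2 * (2 * m + 1)) := by
    rw [show (2 : ℝ) ^ (4 * m) = (4 ^ m) ^ 2 by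
      rw [← pow_mul, mul_comm m 2, pow_mul, pow_mul]; norm_num]
    field_simp
  rw [e, div_mul_eq_mul_div, div_le_div_iff₀ (by positivity) (by positivity)] at hW
  have hpi := Real.pi_pos
  refine (sq_le_sq₀ (by positivity) (by positivity)).mp ?_
  rw [mul_pow, Real.sq_sqrt (by positivity)]
  have h6 : C ^ 2 * Real.pi * (2 * m + 1) ^ 2 ≤ (4 ^ m) ^ 2 * (4 * m + 4) := by nlinarith
  have h7 : 0 ≤ C ^ 2 * Real.pi := by positivity
  have h8 : C ^ 2 * Real.pi * (m * (4 * m + 4)) ≤ C ^ 2 * Real.pi * (2 * m + 1) ^ 2 := by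
    gcongr; nlinarith
  have h9 : (C ^ 2 * Real.pi * m) * (4 * m + 4) ≤ (4 ^ m) ^ 2 * (4 * m + 4) := by nlinarith
  have := le_of_mul_le_mul_right h9 (by positivity)
  linarith

lemma signD_mono (M : ℝ) (hM : 0 ≤ M) (n : ℕ) (x : ℝ) :
    2 * signD M n x ≤ signD M (n + 1) x := by
  have := convex_step (signD_convex M n) (M := M) (b := 0) (by simpa using hM) x
  simp only [signD]
  simp at this
  linarith

/-- The bound for a shifted signed sum. -/
lemma signD_shift (M : ℝ) (n : ℕ) (u : ℝ) (hu : |u| ≤ M) :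
    2 * signD M n u ≤ signD M (n + 1) 0 := by
  have := convex_step (signD_convex M n) hu 0
  simp only [signD]
  rw [zero_add, zero_sub, signD_neg] at this
  linarith

lemma signD_final (M : ℝ) (hM : 0 ≤ M) (n : ℕ) (u : ℝ) (hu : |u| ≤ M) :
    signD M n u * Real.sqrt Real.pi ≤ 2 ^ n * (8 * M ^ 3 * Real.sqrt (((n : ℝ) + 2) / 2) ^ 3) := by
  obtain ⟨m, hm⟩ : ∃ m, m = n / 2 + 1 := ⟨_, rfl⟩
  have hm1 : 1 ≤ m := by omega
  have key : 2 ^ (2 * m) * signD M n u ≤ 2 ^ n * signD M (2 * m) 0 := by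
    have h1 := signD_shift M n u hu
    rcases Nat.even_or_odd' n with ⟨q, rfl | rfl⟩
    · have : m = q + 1 := by omega
      subst this
      have h2 := signD_mono M hM (2 * q + 1) 0
      rw [show 2 * (q + 1) = 2 * q + 1 + 1 by ring, pow_succ, pow_succ]
      have : (0 : ℝ) < 2 ^ (2 * q) := by positivity
      nlinarith
    · have : m = q + 1 := by omega
      subst this
      rw [show 2 * (q + 1) = 2 * q + 1 + 1 by ring, pow_succ _ (2 * q + 1)]
      have : (0 : ℝ) < 2 ^ (2 * q + 1) := by positivity
      nlinarith
  rw [signD_even M hM m] at key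
  have hc := centralBinom_bound m hm1
  have hm' : (m : ℝ) ≤ ((n : ℝ) + 2) / 2 := by
    have : 2 * m ≤ n + 2 := by omega
    have : (2 * m : ℝ) ≤ n + 2 := by exact_mod_cast this
    linarith
  rw [Real.sqrt_mul Real.pi_pos.le] at hc
  have hs : Real.sqrt m ≤ Real.sqrt (((n : ℝ) + 2) / 2) := Real.sqrt_le_sqrt hm'
  have hsm : Real.sqrt m ^ 2 = m := Real.sq_sqrt (by positivity)
  set s := Real.sqrt m
  have hs0 : 0 ≤ s := Real.sqrt_nonneg _
  have h3 : s ^ 3 ≤ Real.sqrt (((n : ℝ) + 2) / 2) ^ 3 := by gcongr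
  have h4 : (2 : ℝ) ^ (2 * m) = 4 ^ m := by rw [pow_mul]; norm_num
  rw [h4] at key
  have hp := Real.sqrt_nonneg Real.pi
  have h5 : 4 ^ m * (signD M n u * Real.sqrt Real.pi) ≤
      4 ^ m * (2 ^ n * (8 * M ^ 3 * s ^ 3)) := by
    calc 4 ^ m * (signD M n u * Real.sqrt Real.pi)
        = (4 ^ m * signD M n u) * Real.sqrt Real.pi := by ring
      _ ≤ (2 ^ n * (8 * M ^ 3 * m ^ 2 * ((2 * m).choose m : ℝ))) * Real.sqrt Real.pi := by gcongr
      _ = 2 ^ n * (8 * M ^ 3 * s ^ 3) * (((2 * m).choose m : ℝ) * (Real.sqrt Real.pi * s)) := by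
        rw [← hsm]; ring
      _ ≤ 2 ^ n * (8 * M ^ 3 * s ^ 3) * 4 ^ m := by gcongr
      _ = _ := by ring
  have h6 := le_of_mul_le_mul_left h5 (by positivity)
  refine h6.trans ?_
  gcongr

section geom
open MeasureTheory

/-- volume of the unit ball of `ℓ^3` in dimension `k` -/
noncomputable def ballV (k : ℕ) : ℝ := (2 * Real.Gamma (1 / 3 + 1)) ^ k / Real.Gamma (k / 3 + 1)

lemma ballV_pos (k : ℕ) : 0 < ballV k := by
  unfold ballV
  have h1 : 0 < Real.Gamma (1 / 3 + 1) := Real.Gamma_pos_of_pos (by norm_num)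
  have h2 : 0 < Real.Gamma ((k : ℝ) / 3 + 1) := Real.Gamma_pos_of_pos (by positivity)
  positivity

lemma volume_cube_le (k : ℕ) (hk : 1 ≤ k) (s : ℝ) (hs : 0 ≤ s) :
    volume {x : Fin k → ℝ | ∑ j, |x j| ^ 3 ≤ s} = ENNReal.ofReal (ballV k * s ^ ((k : ℝ) / 3)) := by
  have : Nonempty (Fin k) := ⟨⟨0, hk⟩⟩
  have h := volume_sum_rpow_le (Fin k) (p := 3) (by norm_num) (s ^ ((1 : ℝ) / 3))
  have hset : {x : Fin k → ℝ | (∑ i, |x i| ^ (3 : ℝ)) ^ ((1 : ℝ) / 3) ≤ s ^ ((1 : ℝ) / 3)}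
      = {x : Fin k → ℝ | ∑ j, |x j| ^ 3 ≤ s} := by
    ext x
    simp only [Set.mem_ofPred_eq]
    rw [Real.rpow_le_rpow_iff (Finset.sum_nonneg fun i _ => by positivity) hs (by norm_num)]
    norm_cast
  rw [hset] at h
  rw [h, Fintype.card_fin, ← ENNReal.ofReal_pow (by positivity), ← ENNReal.ofReal_mul (by positivity)]
  congr 1
  rw [mul_comm, ← Real.rpow_mul_natCast hs, ballV]
  congr 2
  ring

lemma moment_lower (k : ℕ) (hk : 1 ≤ k) (U : Set (Fin k → ℝ)) (T R : ℝ)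
    (hT : 0 < T) (hU : volume U = ENNReal.ofReal T) (hR : 0 < R) (hVR : ballV k * R ^ k = T) :
    ENNReal.ofReal (T * R ^ 3 * (k / (k + 3))) ≤
      ∫⁻ y in U, ENNReal.ofReal (∑ j, |y j| ^ 3) := by
  have hmeas : Measurable (fun y : Fin k → ℝ => ∑ j, |y j| ^ 3) := by fun_prop
  rw [lintegral_eq_lintegral_meas_lt (volume.restrict U)
    (Filter.Eventually.of_forall fun y => Finset.sum_nonneg fun i _ => by positivity)
    hmeas.aemeasurable]
  have hV := ballV_pos k
  have hk0 : (0 : ℝ) ≤ (k : ℝ) / 3 := by positivity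
  have hcont : Continuous (fun s : ℝ => T - ballV k * s ^ ((k : ℝ) / 3)) := by
    have := Real.continuous_rpow_const hk0
    fun_prop
  have hc2 : Continuous (fun s : ℝ => ballV k * s ^ ((k : ℝ) / 3)) := by
    have := Real.continuous_rpow_const hk0
    fun_prop
  have hRk : (R ^ 3) ^ ((k : ℝ) / 3) = R ^ k := by
    rw [← Real.rpow_natCast, ← Real.rpow_natCast, ← Real.rpow_mul hR.le]
    congr 1; push_cast; ring
  calc ENNReal.ofReal (T * R ^ 3 * (k / (k + 3)))
      = ENNReal.ofReal (∫ s in Set.Ioc 0 (R ^ 3), (T - ballV k * s ^ ((k : ℝ) / 3))) := by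
        congr 1
        rw [← intervalIntegral.integral_of_le (by positivity),
          intervalIntegral.integral_sub (by simp)
            (hc2.intervalIntegrable _ _),
          intervalIntegral.integral_const_mul, integral_rpow (Or.inl (by linarith)),
          Real.zero_rpow (by positivity), Real.rpow_add (by positivity), hRk, Real.rpow_one]
        simp only [intervalIntegral.integral_const, smul_eq_mul]
        rw [← hVR]
        field_simp
        ring
    _ = ∫⁻ s in Set.Ioc 0 (R ^ 3), ENNReal.ofReal (T - ballV k * s ^ ((k : ℝ) / 3)) := by
        apply ofReal_integral_eq_lintegral_ofReal
        · exact (hcont.integrableOn_Icc (a := 0) (b := R ^ 3)).mono_set Set.Ioc_subset_Icc_self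
        · refine (ae_restrict_iff' measurableSet_Ioc).mpr (Filter.Eventually.of_forall ?_)
          intro s hs
          have : s ^ ((k : ℝ) / 3) ≤ R ^ k := by
            rw [← hRk]; exact Real.rpow_le_rpow hs.1.le hs.2 hk0
          simp only [Pi.zero_apply, sub_nonneg]
          rw [← hVR]
          gcongr
    _ ≤ ∫⁻ s in Set.Ioc 0 (R ^ 3), volume.restrict U {y : Fin k → ℝ | s < ∑ j, |y j| ^ 3} := by
        refine setLIntegral_mono' measurableSet_Ioc ?_
        intro s hs
        rw [Measure.restrict_apply (measurableSet_lt measurable_const hmeas),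
          ENNReal.ofReal_sub _ (by have := Real.rpow_nonneg hs.1.le ((k : ℝ) / 3); positivity),
          ← hU, ← volume_cube_le k hk s hs.1.le, tsub_le_iff_right]
        refine (measure_mono ?_).trans (measure_union_le _ _)
        intro y hy
        rcases le_or_gt (∑ j, |y j| ^ 3) s with h | h
        · exact Or.inr h
        · exact Or.inl ⟨h, hy⟩
    _ ≤ _ := lintegral_mono_set Set.Ioc_subset_Ioi_self

/-- Upper bound on moments over the union of translated cubes. -/
lemma cubes_bound (k : ℕ) (hk : 1 ≤ k) {α : Type*} [Fintype α] [Nonempty α]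
    (X : α → Fin k → ℝ) (c0 : Fin k → ℝ) (Z : α → Fin k → ℤ) (hZ : Function.Injective Z)
    (hX : ∀ A j, X A j = Z A j + c0 j) (R C : ℝ) (hR : 0 < R)
    (hVR : ballV k * R ^ k = Fintype.card α) (hC0 : 0 ≤ C)
    (hC : ∀ t : Fin k → ℝ, (∀ j, |t j| ≤ 1 / 2) → ∑ A, ∑ j, |X A j + t j| ^ 3 ≤ C) :
    (Fintype.card α : ℝ) * R ^ 3 * (k / (k + 3)) ≤ C := by
  classical
  let Q : Set (Fin k → ℝ) := Set.univ.pi fun _ => Set.Ico (-(1 / 2)) (1 / 2)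
  have hQm : MeasurableSet Q := MeasurableSet.univ_pi fun _ => measurableSet_Ico
  have hQv : volume Q = 1 := by
    rw [volume_pi_pi]; simp; norm_num
  let S : α → Set (Fin k → ℝ) := fun A => (fun y => y - X A) ⁻¹' Q
  have hSm : ∀ A, MeasurableSet (S A) := fun A => hQm.preimage (by fun_prop)
  have hSv : ∀ A, volume (S A) = 1 := fun A => by
    rw [← hQv]
    exact (measurePreserving_sub_right volume (X A)).measure_preimage hQm.nullMeasurableSet
  have hdisj : Pairwise (Function.onFun Disjoint S) := by
    intro A B hAB
    rw [Function.onFun, Set.disjoint_left]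
    intro y hA hB
    apply hAB
    apply hZ
    ext j
    have h1 := hA j (Set.mem_univ j)
    have h2 := hB j (Set.mem_univ j)
    simp only [Pi.sub_apply, Set.mem_Ico, hX] at h1 h2
    have h3 : ((Z A j : ℝ)) < Z B j + 1 := by linarith
    have h4 : ((Z B j : ℝ)) < Z A j + 1 := by linarith
    have h3' : Z A j < Z B j + 1 := by exact_mod_cast h3
    have h4' : Z B j < Z A j + 1 := by exact_mod_cast h4
    omega
  have hUv : volume (⋃ A, S A) = ENNReal.ofReal (Fintype.card α) := by
    rw [measure_iUnion hdisj hSm, tsum_fintype]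
    simp [hSv]
  have hlow := moment_lower k hk _ (Fintype.card α) R (by exact_mod_cast Fintype.card_pos) hUv hR hVR
  have hint : ∀ A, ∫⁻ y in S A, ENNReal.ofReal (∑ j, |y j| ^ 3)
      = ∫⁻ t in Q, ENNReal.ofReal (∑ j, |X A j + t j| ^ 3) := by
    intro A
    have h := (measurePreserving_sub_right (volume : Measure (Fin k → ℝ)) (X A)).setLIntegral_comp_preimage
      hQm (f := fun t => ENNReal.ofReal (∑ j, |X A j + t j| ^ 3)) (by fun_prop)
    rw [← h]
    refine lintegral_congr fun y => ?_
    simp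
  have hup : ∫⁻ y in ⋃ A, S A, ENNReal.ofReal (∑ j, |y j| ^ 3) ≤ ENNReal.ofReal C := by
    rw [lintegral_iUnion hSm hdisj, tsum_fintype]
    simp_rw [hint]
    rw [← lintegral_finsetSum _ (fun A _ => by fun_prop)]
    calc _ ≤ ∫⁻ t in Q, ENNReal.ofReal C := by
          refine setLIntegral_mono' hQm fun t ht => ?_
          rw [← ENNReal.ofReal_sum_of_nonneg (fun A _ => Finset.sum_nonneg fun i _ => by positivity)]
          apply ENNReal.ofReal_le_ofReal
          apply hC
          intro j
          have := ht j (Set.mem_univ j)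
          exact abs_le.mpr ⟨this.1, this.2.le⟩
      _ = _ := by simp [hQv]
  exact (ENNReal.ofReal_le_ofReal_iff hC0).mp (hlow.trans hup)

end geom

lemma core_bound (k : ℕ) (hk : 1 ≤ k) (n : ℕ) (hn : 1 ≤ n) (M : ℕ) (a : Fin n → Fin k → ℤ)
    (ha : ∀ i j, 0 ≤ a i j ∧ a i j ≤ (M : ℤ))
    (hd : ∀ A B : Finset (Fin n), A ≠ B → ∑ i ∈ A, a i ≠ ∑ i ∈ B, a i)
    (R : ℝ) (hR : 0 < R) (hVR : ballV k * R ^ k = 2 ^ n) :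
    R ^ 3 * Real.sqrt Real.pi ≤ (k + 3) * ((M : ℝ) * Real.sqrt (((n : ℝ) + 2) / 2)) ^ 3 := by
  have hM : 1 ≤ M := by
    by_contra h
    have hM0 : M = 0 := by omega
    subst hM0
    apply hd {⟨0, hn⟩} ∅ (by simp)
    ext j
    have := ha ⟨0, hn⟩ j
    simp
    push_cast at this
    omega
  have hM' : (1 : ℝ) ≤ M := by exact_mod_cast hM
  set σ := Real.sqrt (((n : ℝ) + 2) / 2) with hσ
  have hσ0 : 0 ≤ σ := Real.sqrt_nonneg _
  have hpi : 0 < Real.sqrt Real.pi := Real.sqrt_pos.mpr Real.pi_pos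
  have hk' : (0 : ℝ) < k := by exact_mod_cast hk
  have hcard : (Fintype.card (Finset (Fin n)) : ℝ) = 2 ^ n := by simp
  have main := cubes_bound k hk (α := Finset (Fin n))
    (fun A j => (∑ i ∈ A, (a i j : ℝ)) + -(1 / 2) * ∑ i, (a i j : ℝ))
    (fun j => -(1 / 2) * ∑ i, (a i j : ℝ))
    (fun A => ∑ i ∈ A, a i) (fun A B h => by
      by_contra hne
      exact hd A B hne h) (fun A j => by simp) R
    (k * (2 ^ n * (M * σ) ^ 3 / Real.sqrt Real.pi)) hR (by rw [hcard, hVR]) (by positivity) ?_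
  · rw [hcard] at main
    have h2 : (0 : ℝ) < 2 ^ n := by positivity
    have e1 : (2 : ℝ) ^ n * R ^ 3 * (k / (k + 3)) = (2 ^ n * k) * (R ^ 3 / (k + 3)) := by
      field_simp
    have e2 : (k : ℝ) * (2 ^ n * (M * σ) ^ 3 / Real.sqrt Real.pi)
        = (2 ^ n * k) * ((M * σ) ^ 3 / Real.sqrt Real.pi) := by
      field_simp
    rw [e1, e2] at main
    have := le_of_mul_le_mul_left main (by positivity)
    rw [div_le_div_iff₀ (by positivity) hpi] at this
    linarith
  · intro t ht
    rw [Finset.sum_comm]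
    calc _ ≤ ∑ j : Fin k, 2 ^ n * (M * σ) ^ 3 / Real.sqrt Real.pi := by
          refine Finset.sum_le_sum fun j _ => ?_
          have h1 := signed_sum_le (M : ℝ) (fun i => (a i j : ℝ)) Finset.univ (fun i => by
            have := ha i j
            rw [abs_of_nonneg (by exact_mod_cast this.1)]
            exact_mod_cast this.2) (2 * t j)
          rw [Finset.powerset_univ, Finset.card_univ, Fintype.card_fin] at h1
          have hu : |2 * t j| ≤ M := by
            rw [abs_mul, abs_two]
            linarith [ht j]
          have h2 := signD_final M (by positivity) n (2 * t j) hu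
          have h3 : ∀ A : Finset (Fin n),
              |(∑ i ∈ A, (a i j : ℝ)) + -(1 / 2) * ∑ i, (a i j : ℝ) + t j| ^ 3
              = (1 / 8) * |2 * t j + (2 * ∑ i ∈ A, (a i j : ℝ) - ∑ i, (a i j : ℝ))| ^ 3 := by
            intro A
            have : (∑ i ∈ A, (a i j : ℝ)) + -(1 / 2) * ∑ i, (a i j : ℝ) + t j
              = (1 / 2) * (2 * t j + (2 * ∑ i ∈ A, (a i j : ℝ) - ∑ i, (a i j : ℝ))) := by ring
            rw [this, abs_mul, mul_pow]
            norm_num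
          simp_rw [h3]
          rw [← Finset.mul_sum, le_div_iff₀ hpi]
          rw [← hσ] at h2
          nlinarith
      _ = _ := by simp

lemma explicit_bound (k : ℕ) (hk : 1 ≤ k) (n : ℕ) (hn : 1 ≤ n) (M : ℕ) (a : Fin n → Fin k → ℤ)
    (ha : ∀ i j, 0 ≤ a i j ∧ a i j ≤ (M : ℤ))
    (hd : ∀ A B : Finset (Fin n), A ≠ B → ∑ i ∈ A, a i ≠ ∑ i ∈ B, a i) :
    ((k : ℝ) + 3) ^ (-(1 : ℝ) / 3) * (Real.pi / 8) ^ ((1 : ℝ) / 6) *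
        Real.Gamma (((k : ℝ) + 3) / 3) ^ ((1 : ℝ) / k) / Real.Gamma (4 / 3)
      * (2 : ℝ) ^ ((n : ℝ) / k) ≤ M * Real.sqrt ((n : ℝ) + 2) := by
  have hk' : (0 : ℝ) < k := by exact_mod_cast hk
  have hG : 0 < Real.Gamma (((k : ℝ) + 3) / 3) := Real.Gamma_pos_of_pos (by positivity)
  have hg : 0 < Real.Gamma (4 / 3) := Real.Gamma_pos_of_pos (by norm_num)
  have hpi := Real.pi_pos
  obtain ⟨R, hRdef⟩ : ∃ R : ℝ, R = (2 : ℝ) ^ ((n : ℝ) / k) *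
    Real.Gamma (((k : ℝ) + 3) / 3) ^ ((1 : ℝ) / k) / (2 * Real.Gamma (4 / 3)) := ⟨_, rfl⟩
  have hR : 0 < R := by rw [hRdef]; positivity
  have hVR : ballV k * R ^ k = 2 ^ n := by
    have e1 : ((2 : ℝ) ^ ((n : ℝ) / k)) ^ k = 2 ^ n := by
      rw [← Real.rpow_mul_natCast (by norm_num), div_mul_cancel₀ _ hk'.ne', Real.rpow_natCast]
    have e2 : (Real.Gamma (((k : ℝ) + 3) / 3) ^ ((1 : ℝ) / k)) ^ k
        = Real.Gamma (((k : ℝ) + 3) / 3) := by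
      rw [← Real.rpow_mul_natCast hG.le, div_mul_cancel₀ _ hk'.ne', Real.rpow_one]
    rw [hRdef, div_pow, mul_pow, e1, e2, ballV, show (1 : ℝ) / 3 + 1 = 4 / 3 by norm_num,
      show (k : ℝ) / 3 + 1 = (k + 3) / 3 by ring]
    field_simp
  have hcore := core_bound k hk n hn M a ha hd R hR hVR
  have e3 : ((k : ℝ) + 3) ^ (-(1 : ℝ) / 3) * (Real.pi / 8) ^ ((1 : ℝ) / 6) *
        Real.Gamma (((k : ℝ) + 3) / 3) ^ ((1 : ℝ) / k) / Real.Gamma (4 / 3)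
      * (2 : ℝ) ^ ((n : ℝ) / k)
      = ((k : ℝ) + 3) ^ (-(1 : ℝ) / 3) * (Real.pi / 8) ^ ((1 : ℝ) / 6) * (2 * R) := by
    rw [hRdef]; field_simp
  rw [e3]
  refine le_of_pow_le_pow_left₀ (n := 3) (by norm_num) (by positivity) ?_
  have e4 : (((k : ℝ) + 3) ^ (-(1 : ℝ) / 3)) ^ 3 = 1 / (k + 3) := by
    rw [← Real.rpow_mul_natCast (by positivity)]
    norm_num
    rw [Real.rpow_neg_one]
  have e5 : ((Real.pi / 8) ^ ((1 : ℝ) / 6)) ^ 3 = Real.sqrt Real.pi / Real.sqrt 8 := by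
    rw [← Real.rpow_mul_natCast (by positivity), ← Real.sqrt_div hpi.le, Real.sqrt_eq_rpow]
    norm_num
  have e6 : Real.sqrt ((n : ℝ) + 2) = Real.sqrt 2 * Real.sqrt (((n : ℝ) + 2) / 2) := by
    rw [← Real.sqrt_mul (by norm_num)]
    congr 1; ring
  have e7 : Real.sqrt 8 = 2 * Real.sqrt 2 := by
    rw [show (8 : ℝ) = 2 ^ 2 * 2 by norm_num, Real.sqrt_mul (by norm_num),
      Real.sqrt_sq (by norm_num)]
  rw [mul_pow, mul_pow, e4, e5, e6, e7]
  have h2 : Real.sqrt 2 ^ 2 = 2 := Real.sq_sqrt (by norm_num)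
  have h20 : 0 < Real.sqrt 2 := Real.sqrt_pos.mpr (by norm_num)
  set q := Real.sqrt 2
  set σ := Real.sqrt (((n : ℝ) + 2) / 2)
  set P := Real.sqrt Real.pi
  have h8 : 1 / ((k : ℝ) + 3) * (P / (2 * q)) * (2 * R) ^ 3 = (4 / q) * (R ^ 3 * P / (k + 3)) := by
    field_simp; ring
  have h9 : ((M : ℝ) * (q * σ)) ^ 3 = (4 / q) * (M * σ) ^ 3 := by
    have : q ^ 3 = 4 / q := by
      rw [eq_div_iff h20.ne']
      calc q ^ 3 * q = (q ^ 2) ^ 2 := by ring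
        _ = 4 := by rw [h2]; norm_num
    rw [← this]; ring
  rw [h8, h9]
  gcongr
  rw [div_le_iff₀ (by positivity)]
  linarith

/-- Third moment bound: for any `c < (k + 3)^{−1/3} · (π/8)^{1/6} · Γ((k + 3)/3)^{1/k} / Γ(4/3)`,
for all large `n`, any `M`-bounded distinct subset sum sequence `(a_1, …, a_n)` in `ℤ^k`
satisfies `M ≥ c · 2^{n/k} / √n`. -/
theorem third_moment_bound (k : ℕ) (hk : 1 ≤ k) (c : ℝ)
    (hc : c < ((k : ℝ) + 3) ^ (-(1 : ℝ) / 3) * (Real.pi / 8) ^ ((1 : ℝ) / 6) *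
        Real.Gamma (((k : ℝ) + 3) / 3) ^ ((1 : ℝ) / k) / Real.Gamma (4 / 3)) :
    ∃ N : ℕ, ∀ n : ℕ, N ≤ n → ∀ M : ℕ, ∀ a : Fin n → Fin k → ℤ,
      (∀ i j, 0 ≤ a i j ∧ a i j ≤ (M : ℤ)) →
      (∀ A B : Finset (Fin n), A ≠ B → ∑ i ∈ A, a i ≠ ∑ i ∈ B, a i) →
      c * (2 : ℝ) ^ ((n : ℝ) / k) / Real.sqrt n ≤ (M : ℝ) := by

  obtain ⟨K, hK⟩ : ∃ K : ℝ, K = ((k : ℝ) + 3) ^ (-(1 : ℝ) / 3) * (Real.pi / 8) ^ ((1 : ℝ) / 6) *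
        Real.Gamma (((k : ℝ) + 3) / 3) ^ ((1 : ℝ) / k) / Real.Gamma (4 / 3) := ⟨_, rfl⟩
  rw [← hK] at hc
  rcases le_or_gt c 0 with hc0 | hc0
  · refine ⟨0, fun n _ M a _ _ => ?_⟩
    refine le_trans ?_ (Nat.cast_nonneg M)
    apply div_nonpos_of_nonpos_of_nonneg _ (Real.sqrt_nonneg _)
    exact mul_nonpos_of_nonpos_of_nonneg hc0 (by positivity)
  have hdiff : 0 < K ^ 2 - c ^ 2 := by nlinarith
  obtain ⟨N, hN⟩ := exists_nat_ge (2 * c ^ 2 / (K ^ 2 - c ^ 2))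
  refine ⟨N + 1, fun n hn M a ha hd => ?_⟩
  have hb := explicit_bound k hk n (by omega) M a ha hd
  rw [← hK] at hb
  have hNn : (N : ℝ) ≤ n := by exact_mod_cast (by omega : N ≤ n)
  have hn0 : (0 : ℝ) < n := by exact_mod_cast (by omega : 0 < n)
  have h1 : 2 * c ^ 2 ≤ n * (K ^ 2 - c ^ 2) := by
    rw [← div_le_iff₀ hdiff]; linarith
  have h2 : c * Real.sqrt ((n : ℝ) + 2) ≤ K * Real.sqrt n := by
    refine le_of_pow_le_pow_left₀ (n := 2) (by norm_num)
      (mul_nonneg (hc0.le.trans hc.le) (Real.sqrt_nonneg _)) ?_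
    rw [mul_pow, mul_pow, Real.sq_sqrt (by positivity), Real.sq_sqrt (by positivity)]
    linarith
  have hs : 0 < Real.sqrt n := Real.sqrt_pos.mpr hn0
  have hs2 : 0 < Real.sqrt ((n : ℝ) + 2) := Real.sqrt_pos.mpr (by positivity)
  have hP : (0 : ℝ) < (2 : ℝ) ^ ((n : ℝ) / k) := by positivity
  rw [div_le_iff₀ hs]
  refine le_of_mul_le_mul_right ?_ hs2
  calc c * (2 : ℝ) ^ ((n : ℝ) / k) * Real.sqrt ((n : ℝ) + 2)
      = (c * Real.sqrt ((n : ℝ) + 2)) * (2 : ℝ) ^ ((n : ℝ) / k) := by ring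
    _ ≤ (K * Real.sqrt n) * (2 : ℝ) ^ ((n : ℝ) / k) := by gcongr
    _ = (K * (2 : ℝ) ^ ((n : ℝ) / k)) * Real.sqrt n := by ring
    _ ≤ (M * Real.sqrt ((n : ℝ) + 2)) * Real.sqrt n := by gcongr
    _ = _ := by ring
end

section
/- For every integer k ≥ 7, the variance coefficient dominates the other two: (1/√(k + 2)) · √(4/π) · Γ(k/2 + 1)^{1/k} ≥ (1/(k + 1)) · √(π/2) · (k!)^{1/k} and (1/√(k + 2)) · √(4/π) · Γ(k/2 + 1)^{1/k} ≥ (k + 3)^{−1/3} · (π/8)^{1/6} · Γ((k + 3)/3)^{1/k} / Γ(4/3), where Γ denotes the Gamma function. -/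
lemma aux_log_upper (a b : ℝ) (ha : 0 < a) (hab : a ≤ b) :
    Real.log b - Real.log a ≤ (b - a) / 2 * (1 / a + 1 / b) := by
  have hb : 0 < b := ha.trans_le hab
  have h1 : 0 ≤ Real.log (b / a) := Real.log_nonneg (by rw [le_div_iff₀ ha]; linarith)
  have h2 := Real.self_le_sinh_iff.2 h1
  rw [Real.sinh_log (by positivity), Real.log_div hb.ne' ha.ne'] at h2
  refine h2.trans (le_of_eq ?_)
  field_simp
  ring

lemma aux_log_lower (a b : ℝ) (ha : 0 < a) (hab : a ≤ b) :
    2 * (b - a) / (a + b) ≤ Real.log b - Real.log a := by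
  have hb : 0 < b := ha.trans_le hab
  have h := Real.le_log_one_add_of_nonneg (x := (b - a) / a) (div_nonneg (by linarith) ha.le)
  have e : 1 + (b - a) / a = b / a := by field_simp; ring
  rw [e, Real.log_div hb.ne' ha.ne'] at h
  refine le_trans (le_of_eq ?_) h
  have : (b - a) / a + 2 ≠ 0 := by
    have : (b - a) / a + 2 = (a + b) / a := by field_simp; ring
    rw [this]; positivity
  have e2 : (b - a) / a + 2 = (a + b) / a := by field_simp; ring
  rw [e2]
  have : a + b ≠ 0 := by positivity
  field_simp

lemma aux_G_rec (x y : ℝ) (hx : 0 < x) (h : y = x + 1) : Real.Gamma y = x * Real.Gamma x := by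
  rw [h, Real.Gamma_add_one hx.ne']

lemma aux_half : Real.Gamma (1 / 2) ^ 2 = Real.pi := by
  rw [Real.Gamma_one_half_eq, Real.sq_sqrt Real.pi_pos.le]

lemma aux_G_9_2 : Real.Gamma (9 / 2) = 105 / 16 * Real.Gamma (1 / 2) := by
  rw [aux_G_rec (7/2) (9/2) (by norm_num) (by norm_num),
    aux_G_rec (5/2) (7/2) (by norm_num) (by norm_num),
    aux_G_rec (3/2) (5/2) (by norm_num) (by norm_num),
    aux_G_rec (1/2) (3/2) (by norm_num) (by norm_num)]
  ring

lemma aux_G_11_2 : Real.Gamma (11 / 2) = 945 / 32 * Real.Gamma (1 / 2) := by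
  rw [aux_G_rec (9/2) (11/2) (by norm_num) (by norm_num), aux_G_9_2]; ring

lemma aux_G_13_2 : Real.Gamma (13 / 2) = 10395 / 64 * Real.Gamma (1 / 2) := by
  rw [aux_G_rec (11/2) (13/2) (by norm_num) (by norm_num), aux_G_11_2]; ring

lemma aux_G_15_2 : Real.Gamma (15 / 2) = 135135 / 128 * Real.Gamma (1 / 2) := by
  rw [aux_G_rec (13/2) (15/2) (by norm_num) (by norm_num), aux_G_13_2]; ring

lemma aux_G_10_3 : Real.Gamma (10 / 3) = 28 / 9 * Real.Gamma (4 / 3) := by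
  rw [aux_G_rec (7/3) (10/3) (by norm_num) (by norm_num),
    aux_G_rec (4/3) (7/3) (by norm_num) (by norm_num)]; ring

lemma aux_G_13_3 : Real.Gamma (13 / 3) = 280 / 27 * Real.Gamma (4 / 3) := by
  rw [aux_G_rec (10/3) (13/3) (by norm_num) (by norm_num), aux_G_10_3]; ring

lemma aux_G_11_3 : Real.Gamma (11 / 3) = 40 / 9 * Real.Gamma (5 / 3) := by
  rw [aux_G_rec (8/3) (11/3) (by norm_num) (by norm_num),
    aux_G_rec (5/3) (8/3) (by norm_num) (by norm_num)]; ring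

lemma aux_G_14_3 : Real.Gamma (14 / 3) = 440 / 27 * Real.Gamma (5 / 3) := by
  rw [aux_G_rec (11/3) (14/3) (by norm_num) (by norm_num), aux_G_11_3]; ring

lemma aux_G_23_3 : Real.Gamma (23 / 3) = 20 / 3 * (17 / 3) * (14 / 3) * (440 / 27) * Real.Gamma (5 / 3) := by
  rw [aux_G_rec (20/3) (23/3) (by norm_num) (by norm_num),
    aux_G_rec (17/3) (20/3) (by norm_num) (by norm_num),
    aux_G_rec (14/3) (17/3) (by norm_num) (by norm_num), aux_G_14_3]; ring

lemma aux_G_nat (n : ℕ) (x : ℝ) (h : x = n + 1) : Real.Gamma x = n.factorial := by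
  rw [h, Real.Gamma_nat_eq_factorial]

lemma aux_H_pos : 0 < Real.Gamma (5 / 3) := Real.Gamma_pos_of_pos (by norm_num)
lemma aux_G_pos : 0 < Real.Gamma (4 / 3) := Real.Gamma_pos_of_pos (by norm_num)

lemma aux_H_upper : Real.Gamma (5 / 3) ≤ 9065 / 10000 := by
  have h := Real.Gamma_mul_add_mul_le_rpow_Gamma_mul_rpow_Gamma (s := 15 / 2) (t := 8)
    (a := 2 / 3) (b := 1 / 3) (by norm_num) (by norm_num) (by norm_num) (by norm_num) (by norm_num)
  have e : (2 / 3 * (15 / 2) + 1 / 3 * 8 : ℝ) = 23 / 3 := by norm_num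
  rw [e] at h
  have p1 : 0 < Real.Gamma (15 / 2) := Real.Gamma_pos_of_pos (by norm_num)
  have p2 : 0 < Real.Gamma 8 := Real.Gamma_pos_of_pos (by norm_num)
  have p3 : 0 < Real.Gamma (23 / 3) := Real.Gamma_pos_of_pos (by norm_num)
  have h3 := pow_le_pow_left₀ p3.le h 3
  rw [mul_pow, ← Real.rpow_mul_natCast p1.le, ← Real.rpow_mul_natCast p2.le] at h3
  norm_num at h3
  rw [aux_G_15_2, aux_G_23_3, mul_pow (135135 / 128 : ℝ), aux_half, mul_pow] at h3
  norm_num [Nat.factorial] at h3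
  have hpi := Real.pi_lt_d4
  refine le_of_pow_le_pow_left₀ (n := 3) (by norm_num) (by norm_num) ?_
  nlinarith

lemma aux_G_lower : 889 / 1000 ≤ Real.Gamma (4 / 3) := by
  have h := Real.Gamma_mul_Gamma_one_sub (1 / 3)
  have e : Real.pi * (1 / 3) = Real.pi / 3 := by ring
  have e2 : (1 - 1 / 3 : ℝ) = 2 / 3 := by norm_num
  rw [e, Real.sin_pi_div_three, e2] at h
  have h1 := aux_G_rec (1/3) (4/3) (by norm_num) (by norm_num)
  have h2 := aux_G_rec (2/3) (5/3) (by norm_num) (by norm_num)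
  have h3 : Real.Gamma (4 / 3) * Real.Gamma (5 / 3) * √3 = 4 / 9 * Real.pi := by
    rw [h1, h2]
    have : (1 / 3 * Real.Gamma (1 / 3) * (2 / 3 * Real.Gamma (2 / 3))) * √3
      = 2 / 9 * √3 * (Real.Gamma (1 / 3) * Real.Gamma (2 / 3)) := by ring
    rw [this, h]
    have : √3 ≠ 0 := by positivity
    field_simp
    norm_num
  have hs : √3 ≤ 1.7321 := by
    rw [Real.sqrt_le_left (by norm_num)]; norm_num
  have hpi := Real.pi_gt_d4
  have hH := aux_H_upper
  by_contra hc
  push Not at hc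
  have : Real.Gamma (4 / 3) * Real.Gamma (5 / 3) * √3 ≤ 889 / 1000 * (9065 / 10000) * 1.7321 := by
    have := aux_H_pos
    gcongr
  norm_num at *
  linarith

lemma aux_S1 (x : ℝ) (hx : 7 ≤ x) :
    4 * Real.log Real.pi + (2 * x + 2) * Real.log (x + 1) + (x + 2) * Real.log (x + 4)
      ≤ 4 * Real.log 2 + (2 * x + 4) * Real.log (x + 3) + x * Real.log (x + 2) := by
  have h1 := mul_le_mul_of_nonneg_left (aux_log_lower (x+1) (x+3) (by linarith) (by linarith))
    (show 0 ≤ 2 * x + 2 by linarith)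
  have h2 := mul_le_mul_of_nonneg_left (aux_log_upper (x+2) (x+4) (by linarith) (by linarith))
    (show 0 ≤ x + 2 by linarith)
  have h3 := aux_log_lower (x+2) (x+3) (by linarith) (by linarith)
  have h4 : 4 * (Real.log Real.pi - Real.log 2) ≤ 1.9 := by
    have : 40 * Real.log (Real.pi / 2) ≤ 19 := by
      have : Real.log ((Real.pi / 2) ^ 40) ≤ Real.log (Real.exp 1 ^ 19) := by
        apply Real.log_le_log (by positivity)
        calc (Real.pi / 2) ^ 40 ≤ (3.1416 / 2) ^ 40 := by
              gcongr; exact Real.pi_lt_d4.le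
          _ ≤ 2.7182818283 ^ 19 := by norm_num
          _ ≤ _ := by gcongr; exact Real.exp_one_gt_d9.le
      rw [Real.log_pow, Real.log_pow, Real.log_exp] at this
      norm_num at this
      exact this
    rw [Real.log_div (by positivity) (by norm_num)] at this
    norm_num
    linarith
  have h5 : 1.9 ≤ (2 * x + 2) * (2 * ((x+3) - (x+1)) / ((x+1) + (x+3)))
      - (x + 2) * (((x+4) - (x+2)) / 2 * (1 / (x+2) + 1 / (x+4)))
      + 2 * (2 * ((x+3) - (x+2)) / ((x+2) + (x+3))) := by
    obtain ⟨y, hy, rfl⟩ : ∃ y : ℝ, 0 ≤ y ∧ x = y + 7 := ⟨x - 7, by linarith, by ring⟩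
    rw [← sub_nonneg]
    have a1 : 0 < y + 7 + 2 := by linarith
    have a2 : 0 < y + 7 + 4 := by linarith
    have a3 : 0 < y + 7 + 1 + (y + 7 + 3) := by linarith
    have a4 : 0 < y + 7 + 2 + (y + 7 + 3) := by linarith
    field_simp
    ring_nf
    positivity
  linarith

lemma aux_S2 (x : ℝ) (hx : 7 ≤ x) :
    6 * Real.log 8 + (2 * x + 6) * Real.log (x + 3) + (3 * x + 18) * Real.log (x + 8)
        + 24 * Real.log Real.pi
      ≤ 6 * Real.log 9 + 6 * Real.log 512 + 36 * Real.log (Real.Gamma (4 / 3))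
        + 6 * Real.log (x + 4) + (3 * x + 6) * Real.log (x + 2)
        + (2 * x + 12) * Real.log (x + 9) := by
  have h1 := mul_le_mul_of_nonneg_left (aux_log_lower (x+3) (x+9) (by linarith) (by linarith))
    (show 0 ≤ 2 * x + 6 by linarith)
  have h2 := mul_le_mul_of_nonneg_left (aux_log_upper (x+2) (x+5) (by linarith) (by linarith))
    (show 0 ≤ 3 * x + 6 by linarith)
  have h2' := mul_le_mul_of_nonneg_left (aux_log_upper (x+5) (x+8) (by linarith) (by linarith))
    (show 0 ≤ 3 * x + 6 by linarith)
  have h3 := aux_log_lower (x+8) (x+9) (by linarith) (by linarith)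
  have h3' := aux_log_upper (x+4) (x+8) (by linarith) (by linarith)
  have hG := aux_G_pos
  have h4 : 1.06 ≤ Real.log 9 + Real.log 512 + 6 * Real.log (Real.Gamma (4 / 3))
      - Real.log 8 - 4 * Real.log Real.pi := by
    have e : Real.log (9 * 512 * Real.Gamma (4/3) ^ 6 / 8 / Real.pi ^ 4) =
      Real.log 9 + Real.log 512 + 6 * Real.log (Real.Gamma (4 / 3))
      - Real.log 8 - 4 * Real.log Real.pi := by
      rw [Real.log_div (by positivity) (by positivity), Real.log_div (by positivity) (by positivity),
        Real.log_mul (by positivity) (by positivity), Real.log_mul (by positivity) (by positivity),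
        Real.log_pow, Real.log_pow]
      norm_num
    rw [← e]
    have l : (2.9 : ℝ) ≤ 9 * 512 * Real.Gamma (4/3) ^ 6 / 8 / Real.pi ^ 4 := by
      calc (2.9 : ℝ) ≤ 9 * 512 * (889 / 1000) ^ 6 / 8 / 3.1416 ^ 4 := by norm_num
        _ ≤ _ := by
          have := aux_G_lower
          have := Real.pi_lt_d4.le
          gcongr
    refine le_trans ?_ (Real.log_le_log (by norm_num) l)
    have : Real.log (Real.exp 1 ^ 53) ≤ Real.log (2.9 ^ 50) := by
      apply Real.log_le_log (by positivity)
      calc Real.exp 1 ^ 53 ≤ 2.7182818286 ^ 53 := by gcongr; exact Real.exp_one_lt_d9.le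
        _ ≤ _ := by norm_num
    rw [Real.log_pow, Real.log_pow, Real.log_exp] at this
    push_cast at this
    linarith
  have h5 : (3 * x + 6) * (((x+5) - (x+2)) / 2 * (1 / (x+2) + 1 / (x+5)))
      + (3 * x + 6) * (((x+8) - (x+5)) / 2 * (1 / (x+5) + 1 / (x+8)))
      - (2 * x + 6) * (2 * ((x+9) - (x+3)) / ((x+3) + (x+9)))
      + 6 * (((x+8) - (x+4)) / 2 * (1 / (x+4) + 1 / (x+8)))
      - 6 * (2 * ((x+9) - (x+8)) / ((x+8) + (x+9))) ≤ 6.36 := by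
    obtain ⟨y, hy, rfl⟩ : ∃ y : ℝ, 0 ≤ y ∧ x = y + 7 := ⟨x - 7, by linarith, by ring⟩
    rw [← sub_nonneg]
    have a1 : 0 < y + 7 + 2 := by linarith
    have a2 : 0 < y + 7 + 4 := by linarith
    have a5 : 0 < y + 7 + 5 := by linarith
    have a8 : 0 < y + 7 + 8 := by linarith
    have a3 : 0 < y + 7 + 3 + (y + 7 + 9) := by linarith
    have a4 : 0 < y + 7 + 8 + (y + 7 + 9) := by linarith
    field_simp
    ring_nf
    positivity
  linarith

lemma aux_S1' (k : ℕ) (hk : 7 ≤ k) :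
    Real.pi ^ 4 * ((k:ℝ) + 1) ^ (2 * k + 2) * ((k:ℝ) + 4) ^ (k + 2)
      ≤ 2 ^ 4 * ((k:ℝ) + 3) ^ (2 * k + 4) * ((k:ℝ) + 2) ^ k := by
  have h := aux_S1 k (by exact_mod_cast hk)
  have hp := Real.pi_pos
  rw [← Real.log_le_log_iff (by positivity) (by positivity)]
  rw [Real.log_mul (by positivity) (by positivity), Real.log_mul (by positivity) (by positivity),
    Real.log_mul (by positivity) (by positivity), Real.log_mul (by positivity) (by positivity)]
  simp only [Real.log_pow]
  push_cast
  linarith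

lemma aux_S2' (k : ℕ) (hk : 7 ≤ k) :
    8 ^ 6 * ((k:ℝ) + 3) ^ (2 * k + 6) * ((k:ℝ) + 8) ^ (3 * k + 18) * Real.pi ^ 24
      ≤ 9 ^ 6 * 512 ^ 6 * Real.Gamma (4 / 3) ^ 36 * ((k:ℝ) + 4) ^ 6 * ((k:ℝ) + 2) ^ (3 * k + 6)
        * ((k:ℝ) + 9) ^ (2 * k + 12) := by
  have h := aux_S2 k (by exact_mod_cast hk)
  have hp := Real.pi_pos
  have hG := aux_G_pos
  rw [← Real.log_le_log_iff (by positivity) (by positivity)]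
  have n1 : (k:ℝ) + 2 ≠ 0 := by positivity
  have n2 : (k:ℝ) + 3 ≠ 0 := by positivity
  have n3 : (k:ℝ) + 4 ≠ 0 := by positivity
  have n4 : (k:ℝ) + 8 ≠ 0 := by positivity
  have n5 : (k:ℝ) + 9 ≠ 0 := by positivity
  repeat rw [Real.log_mul (by positivity) (by positivity)]
  simp only [Real.log_pow]
  push_cast
  linarith

lemma aux_P1 (k : ℕ) (hk : 7 ≤ k) :
    (k.factorial : ℝ) ^ 2 * Real.pi ^ (2 * k) * ((k:ℝ) + 2) ^ k
      ≤ Real.Gamma ((k:ℝ) / 2 + 1) ^ 2 * 8 ^ k * ((k:ℝ) + 1) ^ (2 * k) := by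
  have hp := Real.pi_pos
  have hp' := Real.pi_lt_d4.le
  induction k using Nat.strong_induction_on with
  | _ k ih =>
    by_cases h9 : 9 ≤ k
    · obtain ⟨m, rfl⟩ : ∃ m, k = m + 2 := ⟨k - 2, by omega⟩
      have h1 := ih m (by omega) (by omega)
      have h2 := aux_S1' m (by omega)
      have e : Real.Gamma (((m + 2 : ℕ):ℝ) / 2 + 1) = ((m:ℝ) / 2 + 1) * Real.Gamma ((m:ℝ) / 2 + 1) :=
        aux_G_rec _ _ (by positivity) (by push_cast; ring)
      have hg : 0 < Real.Gamma ((m:ℝ) / 2 + 1) := Real.Gamma_pos_of_pos (by positivity)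
      rw [e, Nat.factorial_succ, Nat.factorial_succ]
      have h3 := mul_le_mul h1 h2 (by positivity) (by positivity)
      have hc : 0 < ((m:ℝ) + 2) ^ m * ((m:ℝ) + 1) ^ (2 * m) := by positivity
      refine le_of_mul_le_mul_right ?_ hc
      have h4 := mul_le_mul_of_nonneg_left h3 (show 0 ≤ ((m:ℝ) + 2) ^ 2 by positivity)
      push_cast
      convert h4 using 1
      · ring
      · ring
    · have : k = 7 ∨ k = 8 := by omega
      rcases this with rfl | rfl
      · have e : (((7:ℕ):ℝ) / 2 + 1) = 9 / 2 := by norm_num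
        rw [e, aux_G_9_2, mul_pow, aux_half]
        have h : Real.pi ^ 13 ≤ 3.1416 ^ 13 := by gcongr
        have e2 : Real.pi ^ (2 * 7) = Real.pi ^ 13 * Real.pi := by ring
        rw [e2]
        norm_num [Nat.factorial] at h ⊢
        nlinarith
      · rw [aux_G_nat 4 _ (by norm_num)]
        have h : Real.pi ^ 16 ≤ 3.1416 ^ 16 := by gcongr
        norm_num [Nat.factorial] at h ⊢
        linarith

lemma aux_P2 (k : ℕ) (hk : 7 ≤ k) :
    Real.Gamma ((k:ℝ) / 3 + 1) ^ 6 * ((k:ℝ) + 2) ^ (3 * k) * Real.pi ^ (4 * k)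
      ≤ Real.Gamma ((k:ℝ) / 2 + 1) ^ 6 * 512 ^ k * ((k:ℝ) + 3) ^ (2 * k)
        * Real.Gamma (4 / 3) ^ (6 * k) := by
  have hp := Real.pi_pos
  have hp' := Real.pi_lt_d4.le
  have hG := aux_G_pos
  have hG' := aux_G_lower
  have hH := aux_H_pos
  have hH' := aux_H_upper
  have half6 : Real.Gamma (1 / 2) ^ 6 = Real.pi ^ 3 := by
    rw [← aux_half]; ring
  induction k using Nat.strong_induction_on with
  | _ k ih =>
    by_cases h9 : 13 ≤ k
    · obtain ⟨m, rfl⟩ : ∃ m, k = m + 6 := ⟨k - 6, by omega⟩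
      have h1 := ih m (by omega) (by omega)
      have h2 := aux_S2' m (by omega)
      have e : Real.Gamma (((m + 6 : ℕ):ℝ) / 2 + 1) = ((m:ℝ) / 2 + 3) * (((m:ℝ) / 2 + 2) *
          (((m:ℝ) / 2 + 1) * Real.Gamma ((m:ℝ) / 2 + 1))) := by
        rw [aux_G_rec ((m:ℝ) / 2 + 3) _ (by positivity) (by push_cast; ring),
          aux_G_rec ((m:ℝ) / 2 + 2) ((m:ℝ) / 2 + 3) (by positivity) (by push_cast; ring),
          aux_G_rec ((m:ℝ) / 2 + 1) ((m:ℝ) / 2 + 2) (by positivity) (by push_cast; ring)]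
      have e' : Real.Gamma (((m + 6 : ℕ):ℝ) / 3 + 1) = ((m:ℝ) / 3 + 2) *
          (((m:ℝ) / 3 + 1) * Real.Gamma ((m:ℝ) / 3 + 1)) := by
        rw [aux_G_rec ((m:ℝ) / 3 + 2) _ (by positivity) (by push_cast; ring),
          aux_G_rec ((m:ℝ) / 3 + 1) ((m:ℝ) / 3 + 2) (by positivity) (by push_cast; ring)]
      have hg : 0 < Real.Gamma ((m:ℝ) / 2 + 1) := Real.Gamma_pos_of_pos (by positivity)
      have hg' : 0 < Real.Gamma ((m:ℝ) / 3 + 1) := Real.Gamma_pos_of_pos (by positivity)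
      rw [e, e']
      have h3 := mul_le_mul h1 h2 (by positivity) (by positivity)
      have hc : 0 < ((m:ℝ) + 2) ^ (3 * m) * ((m:ℝ) + 3) ^ (2 * m) := by positivity
      refine le_of_mul_le_mul_right ?_ hc
      have h4 := mul_le_mul_of_nonneg_left h3 (show 0 ≤ ((m:ℝ) + 6) ^ 6 / 9 ^ 6 / 8 ^ 6 by positivity)
      generalize Real.Gamma ((m:ℝ) / 2 + 1) = A at *
      generalize Real.Gamma ((m:ℝ) / 3 + 1) = B at *
      generalize Real.Gamma (4 / 3) = G at *
      have r1 : (m:ℝ) / 2 + 3 = ((m:ℝ) + 6) / 2 := by ring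
      have r2 : (m:ℝ) / 2 + 2 = ((m:ℝ) + 4) / 2 := by ring
      have r3 : (m:ℝ) / 2 + 1 = ((m:ℝ) + 2) / 2 := by ring
      have r4 : (m:ℝ) / 3 + 2 = ((m:ℝ) + 6) / 3 := by ring
      have r5 : (m:ℝ) / 3 + 1 = ((m:ℝ) + 3) / 3 := by ring
      have r6 : (((m + 6 : ℕ):ℝ) + 2) = (m:ℝ) + 8 := by push_cast; ring
      have r7 : (((m + 6 : ℕ):ℝ) + 3) = (m:ℝ) + 9 := by push_cast; ring
      rw [r1, r2, r3, r4, r5, r6, r7]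
      generalize (m:ℝ) + 2 = x2 at *
      generalize (m:ℝ) + 3 = x3 at *
      generalize (m:ℝ) + 4 = x4 at *
      generalize (m:ℝ) + 6 = x6 at *
      generalize (m:ℝ) + 8 = x8 at *
      generalize (m:ℝ) + 9 = x9 at *
      convert h4 using 1
      · ring
      · ring
    · have : k = 7 ∨ k = 8 ∨ k = 9 ∨ k = 10 ∨ k = 11 ∨ k = 12 := by omega
      rcases this with rfl | rfl | rfl | rfl | rfl | rfl
      · have e : (((7:ℕ):ℝ) / 2 + 1) = 9 / 2 := by norm_num
        have e' : (((7:ℕ):ℝ) / 3 + 1) = 10 / 3 := by norm_num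
        rw [e, e', aux_G_9_2, aux_G_10_3, mul_pow, mul_pow, half6]
        have h : (28/9:ℝ)^6 * (7+2)^21 * Real.pi ^ 25 ≤
            (105/16)^6 * 512^7 * (7+3)^14 * Real.Gamma (4/3) ^ 36 := by
          calc _ ≤ (28/9:ℝ)^6 * (7+2)^21 * 3.1416 ^ 25 := by gcongr
            _ ≤ (105/16)^6 * 512^7 * (7+3)^14 * (889/1000) ^ 36 := by norm_num
            _ ≤ _ := by gcongr
        have h' := mul_le_mul_of_nonneg_right h
          (show 0 ≤ Real.pi ^ 3 * Real.Gamma (4/3) ^ 6 by positivity)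
        push_cast
        refine le_trans (le_of_eq ?_) (h'.trans (le_of_eq ?_))
        · ring
        · ring
      · have e' : (((8:ℕ):ℝ) / 3 + 1) = 11 / 3 := by norm_num
        rw [aux_G_nat 4 (((8:ℕ):ℝ) / 2 + 1) (by norm_num), e', aux_G_11_3]
        calc _ ≤ (40/9 * (9065/10000):ℝ)^6 * (((8:ℕ):ℝ)+2)^(3*8) * 3.1416 ^ (4*8) := by gcongr
            _ ≤ ((4).factorial:ℝ)^6 * 512^8 * (((8:ℕ):ℝ)+3)^(2*8) * (889/1000) ^ (6*8) := by
              norm_num [Nat.factorial]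
            _ ≤ _ := by gcongr
      · have e : (((9:ℕ):ℝ) / 2 + 1) = 11 / 2 := by norm_num
        rw [e, aux_G_11_2, aux_G_nat 3 (((9:ℕ):ℝ) / 3 + 1) (by norm_num), mul_pow, half6]
        have h : (((3).factorial:ℝ))^6 * (9+2)^27 * Real.pi ^ 33 ≤
            (945/32)^6 * 512^9 * (9+3)^18 * Real.Gamma (4/3) ^ 54 := by
          calc _ ≤ (((3).factorial:ℝ))^6 * (9+2)^27 * 3.1416 ^ 33 := by gcongr
            _ ≤ (945/32)^6 * 512^9 * (9+3)^18 * (889/1000) ^ 54 := by norm_num [Nat.factorial]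
            _ ≤ _ := by gcongr
        have h' := mul_le_mul_of_nonneg_right h (show 0 ≤ Real.pi ^ 3 by positivity)
        push_cast
        refine le_trans (le_of_eq ?_) (h'.trans (le_of_eq ?_))
        · ring
        · ring
      · have e' : (((10:ℕ):ℝ) / 3 + 1) = 13 / 3 := by norm_num
        rw [aux_G_nat 5 (((10:ℕ):ℝ) / 2 + 1) (by norm_num), e', aux_G_13_3, mul_pow]
        have h : (280/27:ℝ)^6 * (10+2)^30 * Real.pi ^ 40 ≤
            ((5).factorial:ℝ)^6 * 512^10 * (10+3)^20 * Real.Gamma (4/3) ^ 54 := by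
          calc _ ≤ (280/27:ℝ)^6 * (10+2)^30 * 3.1416 ^ 40 := by gcongr
            _ ≤ ((5).factorial:ℝ)^6 * 512^10 * (10+3)^20 * (889/1000) ^ 54 := by
              norm_num [Nat.factorial]
            _ ≤ _ := by gcongr
        have h' := mul_le_mul_of_nonneg_right h
          (show 0 ≤ Real.Gamma (4/3) ^ 6 by positivity)
        push_cast
        refine le_trans (le_of_eq ?_) (h'.trans (le_of_eq ?_))
        · ring
        · ring
      · have e : (((11:ℕ):ℝ) / 2 + 1) = 13 / 2 := by norm_num
        have e' : (((11:ℕ):ℝ) / 3 + 1) = 14 / 3 := by norm_num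
        rw [e, aux_G_13_2, e', aux_G_14_3, mul_pow (10395 / 64 : ℝ), half6]
        have h : (440/27 * Real.Gamma (5/3))^6 * (11+2)^33 * Real.pi ^ 41 ≤
            (10395/64)^6 * 512^11 * (11+3)^22 * Real.Gamma (4/3) ^ 66 := by
          calc _ ≤ (440/27 * (9065/10000) : ℝ)^6 * (11+2)^33 * 3.1416 ^ 41 := by gcongr
            _ ≤ (10395/64)^6 * 512^11 * (11+3)^22 * (889/1000) ^ 66 := by norm_num
            _ ≤ _ := by gcongr
        have h' := mul_le_mul_of_nonneg_right h (show 0 ≤ Real.pi ^ 3 by positivity)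
        push_cast
        refine le_trans (le_of_eq ?_) (h'.trans (le_of_eq ?_))
        · ring
        · ring
      · rw [aux_G_nat 6 (((12:ℕ):ℝ) / 2 + 1) (by norm_num), aux_G_nat 4 (((12:ℕ):ℝ) / 3 + 1) (by norm_num)]
        calc _ ≤ ((4).factorial:ℝ)^6 * (((12:ℕ):ℝ)+2)^(3*12) * 3.1416 ^ (4*12) := by gcongr
            _ ≤ ((6).factorial:ℝ)^6 * 512^12 * (((12:ℕ):ℝ)+3)^(2*12) * (889/1000) ^ (6*12) := by
              norm_num [Nat.factorial]
            _ ≤ _ := by gcongr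

lemma aux_root (k j : ℕ) (hk : 7 ≤ k) (x : ℝ) (hx : 0 ≤ x) :
    (x ^ ((1:ℝ) / k)) ^ (j * k) = x ^ j := by
  have : (k:ℝ) ≠ 0 := by positivity
  rw [← Real.rpow_mul_natCast hx, ← Real.rpow_natCast]
  congr 1
  push_cast
  field_simp

/-- For `k ≥ 7`, the variance coefficient dominates the first-moment and
third-moment coefficients. -/
theorem variance_coeff_dominates (k : ℕ) (hk : 7 ≤ k) :
    (1 / Real.sqrt ((k : ℝ) + 2)) * Real.sqrt (4 / Real.pi) *
          Real.Gamma ((k : ℝ) / 2 + 1) ^ ((1 : ℝ) / k)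
        ≥ (1 / ((k : ℝ) + 1)) * Real.sqrt (Real.pi / 2) *
            (k.factorial : ℝ) ^ ((1 : ℝ) / k) ∧
    (1 / Real.sqrt ((k : ℝ) + 2)) * Real.sqrt (4 / Real.pi) *
          Real.Gamma ((k : ℝ) / 2 + 1) ^ ((1 : ℝ) / k)
        ≥ ((k : ℝ) + 3) ^ (-(1 : ℝ) / 3) * (Real.pi / 8) ^ ((1 : ℝ) / 6) *
            Real.Gamma (((k : ℝ) + 3) / 3) ^ ((1 : ℝ) / k) / Real.Gamma (4 / 3) := by
  have hp := Real.pi_pos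
  have hG := aux_G_pos
  have hA : 0 < Real.Gamma ((k : ℝ) / 2 + 1) := Real.Gamma_pos_of_pos (by positivity)
  have e3 : ((k : ℝ) + 3) / 3 = (k:ℝ) / 3 + 1 := by ring
  have hB : 0 < Real.Gamma ((k : ℝ) / 3 + 1) := Real.Gamma_pos_of_pos (by positivity)
  have sq : ∀ (x : ℝ) (j : ℕ), 0 ≤ x → √x ^ (2 * j) = x ^ j := fun x j hx => by
    rw [pow_mul, Real.sq_sqrt hx]
  constructor
  · have h := aux_P1 k hk
    refine le_of_pow_le_pow_left₀ (n := 2 * k) (by omega) (by positivity) ?_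
    simp only [mul_pow, div_pow, one_pow]
    rw [sq _ _ (by positivity), sq _ _ (by positivity), sq _ _ (by positivity),
      aux_root k 2 hk _ hA.le, aux_root k 2 hk _ (by positivity), div_pow, div_pow]
    have e8 : (8:ℝ) ^ k = 4 ^ k * 2 ^ k := by rw [← mul_pow]; norm_num
    rw [e8] at h
    have ep : Real.pi ^ (2 * k) = Real.pi ^ k * Real.pi ^ k := by ring
    rw [ep] at h
    rw [div_mul_div_comm, div_mul_eq_mul_div, div_mul_div_comm, div_mul_eq_mul_div,
      div_le_div_iff₀ (by positivity) (by positivity)]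
    linarith
  · have h := aux_P2 k hk
    rw [e3]
    refine le_of_pow_le_pow_left₀ (n := 6 * k) (by omega) (by positivity) ?_
    have s6 : ∀ (x : ℝ), 0 ≤ x → √x ^ (6 * k) = x ^ (3 * k) := fun x hx => by
      rw [← sq _ _ hx]; congr 1; ring
    have t1 : (((k : ℝ) + 3) ^ (-(1 : ℝ) / 3)) ^ (6 * k) = 1 / ((k:ℝ) + 3) ^ (2 * k) := by
      rw [← Real.rpow_mul_natCast (by positivity), ← Real.rpow_natCast, one_div,
        ← Real.rpow_neg (by positivity)]
      congr 1
      push_cast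
      ring
    have t2 : ((Real.pi / 8) ^ ((1 : ℝ) / 6)) ^ (6 * k) = Real.pi ^ k / 8 ^ k := by
      rw [← Real.rpow_mul_natCast (by positivity), ← div_pow, ← Real.rpow_natCast]
      congr 1
      push_cast
      ring
    rw [div_pow, mul_pow, mul_pow, mul_pow, mul_pow, div_pow, t1, t2, s6 _ (by positivity),
      s6 _ (by positivity), aux_root k 6 hk _ hA.le, aux_root k 6 hk _ hB.le, one_pow, div_pow]
    have e8 : (512:ℝ) ^ k = 4 ^ (3 * k) * 8 ^ k := by rw [pow_mul, ← mul_pow]; norm_num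
    rw [e8] at h
    have ep : Real.pi ^ (4 * k) = Real.pi ^ (3 * k) * Real.pi ^ k := by ring
    rw [ep] at h
    rw [div_mul_div_comm, div_mul_eq_mul_div, div_mul_div_comm, div_mul_eq_mul_div, div_div,
      div_le_div_iff₀ (by positivity) (by positivity)]
    linarith
end
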